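/- arXiv:2007.12111 — 2 statements merged into one kernel-verified Lean document; each statement's English description precedes it below -/
import Mathlib

section
/- Let ε > 0 and let p : ℕ → [0,1] be a function satisfying n·p(n) − log n − log log n → ∞ and n·p(n) − log n − log log n = o(log log n) as n → ∞. Then with high probability the random graph G ~ G(n, p(n)) satisfies the following: for every vertex set W ⊆ V(G) with |W| ≥ 0.1·n such that every v ∈ W has at least min{d_G(v), ε·log n} neighbours inside W, and for every w ∈ W, there exists a set Y ⊆ W with |Y| ≥ n/40 such that for each y ∈ Y the induced subgraph G[W] contains a Hamilton path whose endpoints are w and y. -/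
open scoped Classical in
/-- The probability, under the binomial random graph `G(n,p)`, that a graph
property `P` holds. Each of the `n.choose 2` possible edges is present
independently with probability `p`. -/
noncomputable def gnpProb (n : ℕ) (p : ℝ) (P : SimpleGraph (Fin n) → Prop) : ℝ :=
  ∑ G : SimpleGraph (Fin n),
    (if P G then p ^ G.edgeSet.ncard * (1 - p) ^ (n.choose 2 - G.edgeSet.ncard) else 0)

/-!
Fix a small `δ > 0`. With high probability `G` has minimum degree at least two, its vertices of
degree at most `δ log n` are far apart, its small vertex sets span few edges, and it has a subgraph
`R` with few edges which nevertheless joins any two disjoint sets of linear size. Given `W`, the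
edges of `R` inside `W`, together with about `δ log n` chosen edges from each vertex of `W` to `W`,
form a sparse expander `Γ` on `W`.

By Pósa's rotation argument every expander on `W` has at least `|W|² / 32` boosters: pairs whose
addition lengthens a longest path or creates a Hamilton cycle of `W`. A fixed sparse `Γ` has none
of its boosters in `G` with probability at most `exp (-c n log n)`, and this survives the union
bound over all graphs with at most `κ n log n` edges, provided that `κ` is small in terms of `c`.
Hence boosters contained in `G` can be added to `Γ` until `W` has a Hamilton cycle. Opening this
cycle at `w` and rotating the resulting path with `w` fixed yields `|W| / 4` possible other
endpoints.
-/

open Filter Finset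
open scoped Topology

/-! ### Probabilities in the binomial random graph -/

section GnpProb

variable {n : ℕ} {p : ℝ}

open Classical in
/-- The probability of a single graph under `G(n,p)`. -/
noncomputable def gnpWeight (p : ℝ) (G : SimpleGraph (Fin n)) : ℝ :=
  p ^ #G.edgeFinset * (1 - p) ^ (n.choose 2 - #G.edgeFinset)

open Classical in
theorem gnpProb_eq_sum_gnpWeight (n : ℕ) (p : ℝ) (P : SimpleGraph (Fin n) → Prop) :
    gnpProb n p P = ∑ G, if P G then gnpWeight p G else 0 := by
  simp only [gnpProb, gnpWeight, Set.ncard_eq_toFinset_card', SimpleGraph.edgeFinset]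

theorem gnpWeight_nonneg (h0 : 0 ≤ p) (h1 : p ≤ 1) (G : SimpleGraph (Fin n)) :
    0 ≤ gnpWeight p G :=
  mul_nonneg (pow_nonneg h0 _) (pow_nonneg (sub_nonneg.2 h1) _)

open Classical in
theorem sum_edgeFinset_eq_sum_powerset {V M : Type*} [Fintype V] [DecidableEq V]
    [AddCommMonoid M] (f : Finset (Sym2 V) → M) :
    ∑ G : SimpleGraph V, f G.edgeFinset
      = ∑ T ∈ (⊤ : SimpleGraph V).edgeFinset.powerset, f T := by
  refine sum_bij' (fun G _ => G.edgeFinset)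
    (fun T _ => SimpleGraph.fromEdgeSet (T : Set (Sym2 V))) ?_ ?_ ?_ ?_ ?_
  · exact fun G _ => mem_powerset.2 (SimpleGraph.edgeFinset_mono le_top)
  · exact fun T _ => mem_univ _
  · intro G _
    simp
  · intro T hT
    ext e
    have : e ∈ T → ¬ e.IsDiag := fun he => by simpa using mem_powerset.1 hT he
    simpa using this
  · exact fun G _ => rfl

open Classical in
theorem gnpWeight_mul_ite_eq_prod (p z : ℝ) {A : Finset (Sym2 (Fin n))}
    (B : Finset (Sym2 (Fin n))) (hA : A ⊆ (⊤ : SimpleGraph (Fin n)).edgeFinset)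
    (G : SimpleGraph (Fin n)) :
    gnpWeight p G * (if A ⊆ G.edgeFinset then z ^ #(G.edgeFinset ∩ B) else 0)
      = (∏ e ∈ G.edgeFinset, p * (if e ∈ B then z else 1))
        * ∏ e ∈ (⊤ : SimpleGraph (Fin n)).edgeFinset \ G.edgeFinset,
          (1 - p) * (if e ∈ A then 0 else 1) := by
  have hB : (∏ e ∈ G.edgeFinset, if e ∈ B then z else 1) = z ^ #(G.edgeFinset ∩ B) := by
    rw [prod_ite, prod_const, prod_const_one, mul_one, filter_mem_eq_inter]
  have hA' : (∏ e ∈ (⊤ : SimpleGraph (Fin n)).edgeFinset \ G.edgeFinset,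
      if e ∈ A then (0 : ℝ) else 1) = if A ⊆ G.edgeFinset then 1 else 0 := by
    split_ifs with h
    · exact prod_eq_one fun e he => if_neg fun heA => (mem_sdiff.1 he).2 (h heA)
    · obtain ⟨e, heA, heG⟩ := not_subset.1 h
      exact prod_eq_zero (mem_sdiff.2 ⟨hA heA, heG⟩) (if_pos heA)
  rw [prod_mul_distrib, prod_mul_distrib, hB, hA', prod_const, prod_const,
    card_sdiff_of_subset (SimpleGraph.edgeFinset_mono le_top),
    SimpleGraph.card_edgeFinset_top_eq_card_choose_two, Fintype.card_fin, gnpWeight]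
  split_ifs <;> ring

open Classical in
theorem sum_gnpWeight_mul_pow (p z : ℝ) {A B : Finset (Sym2 (Fin n))}
    (hA : A ⊆ (⊤ : SimpleGraph (Fin n)).edgeFinset)
    (hB : B ⊆ (⊤ : SimpleGraph (Fin n)).edgeFinset) (hAB : Disjoint A B) :
    ∑ G : SimpleGraph (Fin n),
        gnpWeight p G * (if A ⊆ G.edgeFinset then z ^ #(G.edgeFinset ∩ B) else 0)
      = p ^ #A * (1 - p + p * z) ^ #B := by
  have factor (e : Sym2 (Fin n)) :
      p * (if e ∈ B then z else 1) + (1 - p) * (if e ∈ A then 0 else 1)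
        = (if e ∈ A then p else 1) * (if e ∈ B then 1 - p + p * z else 1) := by
    by_cases hea : e ∈ A
    · simp [hea, disjoint_left.1 hAB hea]
    · by_cases heb : e ∈ B <;> simp [hea, heb]
      ring
  simp only [gnpWeight_mul_ite_eq_prod p z B hA]
  rw [sum_edgeFinset_eq_sum_powerset (fun T => (∏ e ∈ T, p * (if e ∈ B then z else 1))
      * ∏ e ∈ (⊤ : SimpleGraph (Fin n)).edgeFinset \ T, (1 - p) * (if e ∈ A then 0 else 1)),
    ← prod_add, prod_congr rfl fun e _ => factor e, prod_mul_distrib, prod_ite_mem, prod_ite_mem,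
    prod_const, prod_const, inter_eq_right.2 hA, inter_eq_right.2 hB]

open Classical in
theorem gnpProb_nonneg (h0 : 0 ≤ p) (h1 : p ≤ 1) (P : SimpleGraph (Fin n) → Prop) :
    0 ≤ gnpProb n p P := by
  rw [gnpProb_eq_sum_gnpWeight]
  exact sum_nonneg fun G _ => ite_nonneg (gnpWeight_nonneg h0 h1 G) le_rfl

theorem gnpProb_not (n : ℕ) (p : ℝ) (P : SimpleGraph (Fin n) → Prop) :
    gnpProb n p (fun G => ¬ P G) = 1 - gnpProb n p P := by
  have total : ∑ G : SimpleGraph (Fin n), gnpWeight p G = 1 := by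
    simpa using sum_gnpWeight_mul_pow (n := n) p 1 (empty_subset _) (empty_subset _)
      (disjoint_empty_left ∅)
  rw [eq_sub_iff_add_eq, gnpProb_eq_sum_gnpWeight, gnpProb_eq_sum_gnpWeight, ← sum_add_distrib,
    ← total]
  exact sum_congr rfl fun G _ => by by_cases h : P G <;> simp [h]

open Classical in
theorem gnpProb_le_sum (h0 : 0 ≤ p) (h1 : p ≤ 1) {ι : Type*} (s : Finset ι)
    {P : SimpleGraph (Fin n) → Prop} {Q : ι → SimpleGraph (Fin n) → Prop}
    (h : ∀ G, P G → ∃ i ∈ s, Q i G) :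
    gnpProb n p P ≤ ∑ i ∈ s, gnpProb n p (Q i) := by
  simp only [gnpProb_eq_sum_gnpWeight]
  rw [sum_comm]
  refine sum_le_sum fun G _ => ?_
  have nonneg : ∀ i ∈ s, 0 ≤ if Q i G then gnpWeight p G else 0 :=
    fun i _ => ite_nonneg (gnpWeight_nonneg h0 h1 G) le_rfl
  split_ifs with hP
  · obtain ⟨i, hi, hQ⟩ := h G hP
    simpa [hQ] using single_le_sum nonneg hi
  · exact sum_nonneg nonneg

theorem gnpProb_mono (h0 : 0 ≤ p) (h1 : p ≤ 1) {P Q : SimpleGraph (Fin n) → Prop}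
    (h : ∀ G, P G → Q G) : gnpProb n p P ≤ gnpProb n p Q := by
  simpa using gnpProb_le_sum h0 h1 {()} (Q := fun _ => Q) fun G hG => ⟨(), by simp, h G hG⟩

open Classical in
theorem gnpProb_le_mul_exp (h0 : 0 ≤ p) (h1 : p ≤ 1) {z K : ℝ} (hz : 0 ≤ z) (hK : 0 ≤ K)
    {A B : Finset (Sym2 (Fin n))} (hB : B ⊆ (⊤ : SimpleGraph (Fin n)).edgeFinset)
    (hAB : Disjoint A B) {P : SimpleGraph (Fin n) → Prop}
    (hPA : ∀ G, P G → A ⊆ G.edgeFinset)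
    (hPB : ∀ G, P G → 1 ≤ K * z ^ #(G.edgeFinset ∩ B)) :
    gnpProb n p P ≤ K * (p ^ #A * Real.exp (-(p * (1 - z) * #B))) := by
  have base_le : (1 - p + p * z) ^ #B ≤ Real.exp (-(p * (1 - z) * #B)) := by
    calc (1 - p + p * z) ^ #B ≤ Real.exp (-(p * (1 - z))) ^ #B :=
          pow_le_pow_left₀ (add_nonneg (sub_nonneg.2 h1) (mul_nonneg h0 hz))
            (by linarith [Real.add_one_le_exp (-(p * (1 - z)))]) _
      _ = Real.exp (-(p * (1 - z) * #B)) := by rw [← Real.exp_nat_mul]; ring_nf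
  by_cases hA : A ⊆ (⊤ : SimpleGraph (Fin n)).edgeFinset
  · refine le_trans ?_ (mul_le_mul_of_nonneg_left
      (mul_le_mul_of_nonneg_left base_le (pow_nonneg h0 _)) hK)
    rw [← sum_gnpWeight_mul_pow p z hA hB hAB, gnpProb_eq_sum_gnpWeight, mul_sum]
    refine sum_le_sum fun G _ => ?_
    have weight_nonneg := gnpWeight_nonneg h0 h1 G
    split_ifs with hP hAG hAG
    · nlinarith [hPB G hP]
    · exact absurd (hPA G hP) hAG
    · positivity
    · simp
  · have impossible : ∀ G, ¬ P G :=
      fun G hG => hA ((hPA G hG).trans (SimpleGraph.edgeFinset_mono le_top))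
    simp only [gnpProb_eq_sum_gnpWeight, impossible, if_false, sum_const_zero]
    positivity

open Classical in
theorem gnpProb_le_card_inter (h0 : 0 ≤ p) (h1 : p ≤ 1) {t : ℝ} (ht : 0 ≤ t) (r : ℝ)
    (B : Finset (Sym2 (Fin n))) :
    gnpProb n p (fun G => r ≤ #(G.edgeFinset ∩ B))
      ≤ Real.exp (-(t * r) + p * Real.exp t * #B) := by
  have edges_inter (G : SimpleGraph (Fin n)) :
      G.edgeFinset ∩ (B ∩ (⊤ : SimpleGraph (Fin n)).edgeFinset) = G.edgeFinset ∩ B := by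
    rw [inter_left_comm, inter_eq_left.2 (SimpleGraph.edgeFinset_mono le_top), inter_comm]
  refine (gnpProb_le_mul_exp h0 h1 (Real.exp_nonneg t) (Real.exp_nonneg (-(t * r)))
    (B := B ∩ (⊤ : SimpleGraph (Fin n)).edgeFinset) inter_subset_right (disjoint_empty_left _)
    (fun G _ => empty_subset _) fun G hG => ?_).trans ?_
  · rw [edges_inter, ← Real.exp_nat_mul, ← Real.exp_add, Real.one_le_exp_iff]
    nlinarith
  · have card_le : (#(B ∩ (⊤ : SimpleGraph (Fin n)).edgeFinset) : ℝ) ≤ #B := by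
      exact_mod_cast card_le_card inter_subset_left
    have := mul_le_mul_of_nonneg_left card_le (mul_nonneg h0 (Real.exp_nonneg t))
    rw [card_empty, pow_zero, one_mul, ← Real.exp_add, Real.exp_le_exp]
    nlinarith [mul_nonneg h0 (Nat.cast_nonneg (α := ℝ)
      #(B ∩ (⊤ : SimpleGraph (Fin n)).edgeFinset))]

open Classical in
theorem gnpProb_card_inter_le (h0 : 0 ≤ p) (h1 : p ≤ 1) {t : ℝ} (ht : 0 ≤ t) (r : ℝ)
    {A B : Finset (Sym2 (Fin n))} (hB : B ⊆ (⊤ : SimpleGraph (Fin n)).edgeFinset)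
    (hAB : Disjoint A B) :
    gnpProb n p (fun G => A ⊆ G.edgeFinset ∧ (#(G.edgeFinset ∩ B) : ℝ) ≤ r)
      ≤ p ^ #A * Real.exp (t * r - p * (1 - Real.exp (-t)) * #B) := by
  refine (gnpProb_le_mul_exp h0 h1 (Real.exp_nonneg (-t)) (Real.exp_nonneg (t * r)) hB hAB
    (fun G hG => hG.1) fun G hG => ?_).trans_eq ?_
  · rw [← Real.exp_nat_mul, ← Real.exp_add, Real.one_le_exp_iff]
    nlinarith [hG.2]
  · rw [mul_left_comm, ← Real.exp_add, ← sub_eq_add_neg]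

open Classical in
theorem gnpProb_disjoint_le (h0 : 0 ≤ p) (h1 : p ≤ 1) {A B : Finset (Sym2 (Fin n))}
    (hB : B ⊆ (⊤ : SimpleGraph (Fin n)).edgeFinset) (hAB : Disjoint A B) :
    gnpProb n p (fun G => A ⊆ G.edgeFinset ∧ Disjoint G.edgeFinset B)
      ≤ p ^ #A * Real.exp (-(p * #B)) := by
  simpa using gnpProb_le_mul_exp h0 h1 le_rfl zero_le_one hB hAB
    (P := fun G => A ⊆ G.edgeFinset ∧ Disjoint G.edgeFinset B) (fun G hG => hG.1)
    (fun G hG => by simp [disjoint_iff_inter_eq_empty.1 hG.2])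

end GnpProb

/-! ### Properties holding with high probability -/

/-- The property `P n` of graphs on `n` vertices holds with high probability in `G(n, p n)`. -/
def WithHighProb (p : ℕ → ℝ) (P : ∀ n, SimpleGraph (Fin n) → Prop) : Prop :=
  Tendsto (fun n => gnpProb n (p n) (P n)) atTop (𝓝 1)

namespace WithHighProb

variable {p : ℕ → ℝ} {P Q : ∀ n, SimpleGraph (Fin n) → Prop}

theorem iff_tendsto_not :
    WithHighProb p P ↔ Tendsto (fun n => gnpProb n (p n) fun G => ¬ P n G) atTop (𝓝 0) := by
  simp only [gnpProb_not]
  rw [WithHighProb, ← tendsto_sub_nhds_zero_iff, ← neg_zero (G := ℝ), ← tendsto_neg_iff]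
  simp only [neg_sub, neg_zero]

theorem of_not_le (hp01 : ∀ n, 0 ≤ p n ∧ p n ≤ 1) {f : ℕ → ℝ} (hf : Tendsto f atTop (𝓝 0))
    (h : ∀ᶠ n in atTop, gnpProb n (p n) (fun G => ¬ P n G) ≤ f n) : WithHighProb p P :=
  iff_tendsto_not.2 <| squeeze_zero' (.of_forall fun n => gnpProb_nonneg (hp01 n).1 (hp01 n).2 _)
    h hf

theorem mono (hp01 : ∀ n, 0 ≤ p n ∧ p n ≤ 1) (hP : WithHighProb p P)
    (h : ∀ᶠ n in atTop, ∀ G, P n G → Q n G) : WithHighProb p Q :=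
  of_not_le hp01 (iff_tendsto_not.1 hP) <| h.mono fun n hn =>
    gnpProb_mono (hp01 n).1 (hp01 n).2 fun G hQ hPG => hQ (hn G hPG)

theorem finset_forall (hp01 : ∀ n, 0 ≤ p n ∧ p n ≤ 1) {ι : Type*} (s : Finset ι)
    {P : ι → ∀ n, SimpleGraph (Fin n) → Prop} (h : ∀ i ∈ s, WithHighProb p (P i)) :
    WithHighProb p fun n G => ∀ i ∈ s, P i n G := by
  refine of_not_le hp01
    (by simpa using tendsto_finsetSum s fun i hi => iff_tendsto_not.1 (h i hi))
    (.of_forall fun n => gnpProb_le_sum (hp01 n).1 (hp01 n).2 s fun G hG => ?_)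
  simpa using hG

theorem and (hp01 : ∀ n, 0 ≤ p n ∧ p n ≤ 1) (hP : WithHighProb p P) (hQ : WithHighProb p Q) :
    WithHighProb p fun n G => P n G ∧ Q n G :=
  (finset_forall hp01 (univ : Finset Bool) (P := fun b => bif b then Q else P)
    (by simp [hP, hQ])).mono hp01 (.of_forall fun n G h => by simpa using h)

theorem eventually_exists (hP : WithHighProb p P) : ∀ᶠ n in atTop, ∃ G, P n G := by
  filter_upwards [hP.eventually (lt_mem_nhds one_half_lt_one)] with n hn
  by_contra! hne
  norm_num [gnpProb, hne] at hn

end WithHighProb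

/-! ### Pósa rotations -/

section Rotations

variable {V : Type*} {Γ : SimpleGraph V} {l₀ l : List V} {s t u v : V}

theorem infix_pair_append {l₁ l₂ : List V} (h : [s, t] <:+: l₁ ++ l₂) :
    [s, t] <:+: l₁ ∨ [s, t] <:+: l₂ ∨ (l₁.getLast? = some s ∧ l₂.head? = some t) := by
  rcases List.infix_append_iff_ne_nil.1 h with h | h | ⟨a, b, ha, hb, hab, hsuf, hpre⟩
  · exact .inl h
  · exact .inr (.inl h)
  · obtain ⟨rfl, rfl⟩ : a = [s] ∧ b = [t] := by
      match a, b, ha, hb, hab with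
      | [_], [_], _, _, hab => simpa [eq_comm] using hab
      | _ :: _ :: _, _ :: _, _, _, hab => simp at hab
    refine .inr (.inr ⟨?_, ?_⟩)
    · obtain ⟨c, rfl⟩ := hsuf
      simp
    · obtain ⟨c, rfl⟩ := hpre
      simp

theorem eq_of_infix_pair_left (hl : l.Nodup) (ht : [s, t] <:+: l) (hu : [s, u] <:+: l) :
    t = u := by
  obtain ⟨i, hi, ht⟩ := List.infix_iff_getElem?.1 ht
  obtain ⟨j, hj, hu⟩ := List.infix_iff_getElem?.1 hu
  have ht₀ := ht 0 (by simp)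
  have hu₀ := hu 0 (by simp)
  have ht₁ := ht 1 (by simp)
  have hu₁ := hu 1 (by simp)
  simp only [List.length_cons, List.length_nil] at hi
  obtain rfl : i = j := (List.getElem?_inj (by lia) hl).1 (by simpa using ht₀.trans hu₀.symm)
  simpa using ht₁.symm.trans hu₁

theorem eq_of_infix_pair_right (hl : l.Nodup) (hs : [s, t] <:+: l) (hu : [u, t] <:+: l) :
    s = u :=
  eq_of_infix_pair_left (List.nodup_reverse.2 hl) (by simpa using List.reverse_infix.2 hs)
    (by simpa using List.reverse_infix.2 hu)

theorem not_infix_pair_getLast (hl : l.Nodup) (hs : l.getLast? = some s) :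
    ¬ [s, t] <:+: l := by
  rintro ⟨a, b, rfl⟩
  have mem_tail : s ∈ t :: b :=
    List.mem_of_getLast? (by simpa [List.getLast?_append, List.getLast?_cons] using hs)
  rw [List.append_assoc, List.nodup_append] at hl
  exact (List.nodup_cons.1 hl.2.1).1 mem_tail

/-- Two vertices are consecutive in the list `l`, in either order. -/
def AreConsecutive (l : List V) (u v : V) : Prop := [u, v] <:+: l ∨ [v, u] <:+: l

/-- `RotatesTo Γ l₀ l` means that the path `l` arises from the path `l₀` by Pósa rotations: for a
path `a ++ x :: b` with last vertex `y`, an edge `xy` of `Γ` allows to reverse the final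
segment `b`. -/
inductive RotatesTo (Γ : SimpleGraph V) (l₀ : List V) : List V → Prop
  | refl : RotatesTo Γ l₀ l₀
  | rotate (a : List V) {x : V} {b : List V} {y : V} : RotatesTo Γ l₀ (a ++ x :: b) →
      b.getLast? = some y → Γ.Adj x y → RotatesTo Γ l₀ (a ++ x :: b.reverse)

theorem RotatesTo.perm (h : RotatesTo Γ l₀ l) : l.Perm l₀ := by
  induction h with
  | refl => exact .refl _
  | rotate a _ _ _ ih => exact (((List.reverse_perm _).cons _).append_left a).trans ih

theorem RotatesTo.head?_eq (h : RotatesTo Γ l₀ l) : l.head? = l₀.head? := by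
  induction h with
  | refl => rfl
  | rotate a _ _ _ ih =>
    rw [← ih]
    cases a <;> rfl

theorem RotatesTo.isChain (h : RotatesTo Γ l₀ l) (h₀ : l₀.IsChain Γ.Adj) :
    l.IsChain Γ.Adj := by
  induction h with
  | refl => exact h₀
  | rotate a _ hy hxy ih =>
    rw [List.isChain_split, List.isChain_cons] at ih ⊢
    refine ⟨ih.1, fun z hz => ?_, List.isChain_reverse.2 (ih.2.2.imp fun _ _ h => h.symm)⟩
    rw [List.head?_reverse, hy, Option.mem_some_iff] at hz
    exact hz ▸ hxy

variable [Fintype V]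

open Classical in
/-- The external neighbourhood of `S`: the vertices outside `S` with a neighbour in `S`. -/
noncomputable def externalNeighbors (Γ : SimpleGraph V) (S : Finset V) : Finset V :=
  {u | u ∉ S ∧ ∃ s ∈ S, Γ.Adj s u}

theorem mem_externalNeighbors {S : Finset V} :
    u ∈ externalNeighbors Γ S ↔ u ∉ S ∧ ∃ s ∈ S, Γ.Adj s u := by
  simp [externalNeighbors]

open Classical in
/-- The last vertices of all paths that arise from `l₀` by rotations. -/
noncomputable def rotationEndpoints (Γ : SimpleGraph V) (l₀ : List V) : Finset V :=
  {y | ∃ l, RotatesTo Γ l₀ l ∧ l.getLast? = some y}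

theorem mem_rotationEndpoints :
    v ∈ rotationEndpoints Γ l₀ ↔ ∃ l, RotatesTo Γ l₀ l ∧ l.getLast? = some v := by
  simp [rotationEndpoints]

theorem RotatesTo.succ_mem_rotationEndpoints {a b : List V} {x y z : V}
    (h : RotatesTo Γ l₀ (a ++ x :: z :: b)) (hy : (z :: b).getLast? = some y)
    (hxy : Γ.Adj x y) : z ∈ rotationEndpoints Γ l₀ :=
  mem_rotationEndpoints.2 ⟨_, .rotate a h hy hxy, by simp [List.getLast?_cons]⟩

theorem mem_of_mem_rotationEndpoints (h : v ∈ rotationEndpoints Γ l₀) : v ∈ l₀ := by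
  obtain ⟨l, hl, hv⟩ := mem_rotationEndpoints.1 h
  exact hl.perm.mem_iff.1 (List.mem_of_getLast? hv)

theorem RotatesTo.areConsecutive (hu : u ∉ rotationEndpoints Γ l₀)
    (hu' : ∀ s ∈ rotationEndpoints Γ l₀, ¬ AreConsecutive l₀ u s) (h : RotatesTo Γ l₀ l)
    (huv : AreConsecutive l u v) : AreConsecutive l₀ u v := by
  -- A rotation breaks up just one consecutive pair, one of whose vertices becomes an endpoint.
  induction h generalizing v with
  | refl => exact huv
  | @rotate a x b y hr hy hxy ih =>
    have ne_end : u ≠ y := fun h => hu <| h ▸ mem_rotationEndpoints.2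
      ⟨_, hr, by simp [List.getLast?_append, List.getLast?_cons, hy]⟩
    have ne_pivot : u ≠ x := by
      rintro rfl
      cases b with
      | nil => simp at hy
      | cons z b =>
        exact hu' z (hr.succ_mem_rotationEndpoints hy hxy) (ih (.inl ⟨a, b, by simp⟩))
    have before_rotation {s t : V} (hst : s = u ∨ t = u)
        (h : [s, t] <:+: a ++ x :: b.reverse) : AreConsecutive (a ++ x :: b) s t := by
      rw [List.append_cons] at h
      rw [AreConsecutive, List.append_cons]
      rcases infix_pair_append h with h | h | ⟨hs, ht⟩
      · exact .inl (h.trans List.infix_append_left)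
      · exact .inr (.trans (by simpa using List.reverse_infix.2 h) List.infix_append_right)
      · obtain rfl : x = s := by simpa using hs
        obtain rfl : y = t := by simpa [List.head?_reverse, hy] using ht
        exact (hst.elim ne_pivot.symm ne_end.symm).elim
    exact ih <| huv.elim (before_rotation (.inl rfl)) fun h => (before_rotation (.inr rfl) h).symm

theorem exists_areConsecutive_of_mem_externalNeighbors
    (hclosed : ∀ y ∈ rotationEndpoints Γ l₀, ∀ u, Γ.Adj y u → u ∈ l₀)
    (hu : u ∈ externalNeighbors Γ (rotationEndpoints Γ l₀)) :
    ∃ s ∈ rotationEndpoints Γ l₀, AreConsecutive l₀ u s := by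
  obtain ⟨hu, y, hy, hyu⟩ := mem_externalNeighbors.1 hu
  by_contra! hu'
  obtain ⟨l, hl, hly⟩ := mem_rotationEndpoints.1 hy
  obtain ⟨a, b, rfl⟩ := List.append_of_mem (hl.perm.mem_iff.2 (hclosed y hy u hyu))
  cases b with
  | nil => exact hyu.ne (by simpa using hly.symm)
  | cons z b =>
    have hz : z ∈ rotationEndpoints Γ l₀ := hl.succ_mem_rotationEndpoints
      (by simpa [List.getLast?_append, List.getLast?_cons] using hly) hyu.symm
    exact hu' z hz (hl.areConsecutive hu hu' (.inl ⟨a, b, by simp⟩))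

theorem card_externalNeighbors_rotationEndpoints_lt (hne : l₀ ≠ []) (hl₀ : l₀.Nodup)
    (hclosed : ∀ y ∈ rotationEndpoints Γ l₀, ∀ u, Γ.Adj y u → u ∈ l₀) :
    #(externalNeighbors Γ (rotationEndpoints Γ l₀)) < 2 * #(rotationEndpoints Γ l₀) := by
  classical
  set S := rotationEndpoints Γ l₀
  have last_mem : l₀.getLast hne ∈ S :=
    mem_rotationEndpoints.2 ⟨l₀, .refl, List.getLast?_eq_some_getLast hne⟩
  set before : Finset V := {u | ∃ s ∈ S, [u, s] <:+: l₀}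
  set after : Finset V := {u | ∃ s ∈ S.erase (l₀.getLast hne), [s, u] <:+: l₀}
  have cover : externalNeighbors Γ S ⊆ before ∪ after := fun u hu => by
    obtain ⟨s, hs, h | h⟩ := exists_areConsecutive_of_mem_externalNeighbors hclosed hu
    · exact mem_union_left _ (by simpa [before] using ⟨s, hs, h⟩)
    · have hne_last : s ≠ l₀.getLast hne := fun hs => not_infix_pair_getLast hl₀
        (List.getLast?_eq_some_getLast hne) (hs ▸ h)
      exact mem_union_right _ (by simpa [after] using ⟨s, ⟨hne_last, hs⟩, h⟩)
  have card_before : #before ≤ #S :=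
    card_le_card_of_forall_subsingleton (fun u s => [u, s] <:+: l₀)
      (fun u hu => by simpa [before] using hu)
      fun s _ u hu v hv => eq_of_infix_pair_right hl₀ hu.2 hv.2
  have card_after : #after ≤ #(S.erase (l₀.getLast hne)) :=
    card_le_card_of_forall_subsingleton (fun u s => [s, u] <:+: l₀)
      (fun u hu => by simpa [after] using hu)
      fun s _ u hu v hv => eq_of_infix_pair_left hl₀ hu.2 hv.2
  have := (card_le_card cover).trans (card_union_le _ _)
  have := card_erase_lt_of_mem last_mem
  lia

end Rotations

/-! ### Boosters of expanders -/

section Boosters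

variable {V : Type*} {Γ Γ' : SimpleGraph V} {l l' : List V} {u x y t : V}

/-- `l` lists the vertices of a path of `Γ` in order. Isolated vertices of `Γ` do not count as
paths, so that a path of `Γ` stays inside every set containing the edges of `Γ`. -/
structure IsPathList (Γ : SimpleGraph V) (l : List V) : Prop where
  nodup : l.Nodup
  isChain : l.IsChain Γ.Adj
  mem_support : ∀ v ∈ l, v ∈ Γ.support

namespace IsPathList

theorem nil : IsPathList Γ [] := ⟨by simp, by simp, by simp⟩

theorem mono (hl : IsPathList Γ l) (h : Γ ≤ Γ') : IsPathList Γ' l where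
  nodup := hl.nodup
  isChain := hl.isChain.imp fun _ _ huv => h huv
  mem_support v hv := SimpleGraph.support_mono h (hl.mem_support v hv)

theorem reverse (hl : IsPathList Γ l) : IsPathList Γ l.reverse where
  nodup := List.nodup_reverse.2 hl.nodup
  isChain := List.isChain_reverse.2 (hl.isChain.imp fun _ _ h => h.symm)
  mem_support v hv := hl.mem_support v (List.mem_reverse.1 hv)

theorem rotatesTo (hl : IsPathList Γ l) (h : RotatesTo Γ l l') : IsPathList Γ l' where
  nodup := h.perm.nodup_iff.2 hl.nodup
  isChain := h.isChain hl.isChain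
  mem_support v hv := hl.mem_support v (h.perm.mem_iff.1 hv)

theorem cons (hl : IsPathList Γ l) (hx : l.head? = some x) (hux : Γ.Adj u x) (hu : u ∉ l) :
    IsPathList Γ (u :: l) where
  nodup := List.nodup_cons.2 ⟨hu, hl.nodup⟩
  isChain := List.isChain_cons.2 ⟨fun v hv => by
    rw [hx, Option.mem_some_iff] at hv
    exact hv ▸ hux, hl.isChain⟩
  mem_support := List.forall_mem_cons.2 ⟨⟨x, hux⟩, hl.mem_support⟩

theorem head_ne_getLast (hl : IsPathList Γ l) (h2 : 2 ≤ l.length) (hy : l.head? = some y)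
    (ht : l.getLast? = some t) : y ≠ t := by
  match l, hl.nodup, h2 with
  | a :: b :: l, hnd, _ =>
    obtain rfl : a = y := by simpa using hy
    rw [List.getLast?_cons_cons] at ht
    exact fun h => (List.nodup_cons.1 hnd).1 (h ▸ List.mem_of_getLast? ht)

theorem exists_perm_head?_eq_some (hl : IsPathList Γ l) (hy : l.head? = some y)
    (ht : l.getLast? = some t) (hty : Γ.Adj t y) (hx : x ∈ l) :
    ∃ m, IsPathList Γ m ∧ m.Perm l ∧ m.head? = some x := by
  obtain ⟨a, b, rfl⟩ := List.append_of_mem hx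
  have perm : (x :: b ++ a).Perm (a ++ x :: b) := List.perm_append_comm
  refine ⟨x :: b ++ a, ⟨perm.nodup_iff.2 hl.nodup, ?_,
    fun v hv => hl.mem_support v (perm.mem_iff.1 hv)⟩, perm, rfl⟩
  have hab := List.isChain_append.1 hl.isChain
  refine List.isChain_append.2 ⟨hab.2.1, hab.1, fun u hu v hv => ?_⟩
  obtain rfl : u = t := by
    rw [Option.mem_def] at hu
    simpa [List.getLast?_append, hu] using ht
  obtain rfl : v = y := by
    rw [Option.mem_def] at hv
    simpa [List.head?_append, hv] using hy
  exact hty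

end IsPathList

/-- `l` is a path of maximum length of `Γ`. -/
def IsLongestPathList (Γ : SimpleGraph V) (l : List V) : Prop :=
  IsPathList Γ l ∧ ∀ l', IsPathList Γ l' → l'.length ≤ l.length

namespace IsLongestPathList

theorem rotatesTo (hl : IsLongestPathList Γ l) (h : RotatesTo Γ l l') :
    IsLongestPathList Γ l' :=
  ⟨hl.1.rotatesTo h, fun m hm => h.perm.length_eq ▸ hl.2 m hm⟩

theorem reverse (hl : IsLongestPathList Γ l) : IsLongestPathList Γ l.reverse :=
  ⟨hl.1.reverse, fun m hm => List.length_reverse (as := l) ▸ hl.2 m hm⟩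

theorem two_le_length (hl : IsLongestPathList Γ l) (hxy : Γ.Adj x y) : 2 ≤ l.length :=
  hl.2 [x, y] ⟨by simp [hxy.ne], by simp [hxy], by simpa using ⟨⟨y, hxy⟩, ⟨x, hxy.symm⟩⟩⟩

end IsLongestPathList

theorem exists_isLongestPathList [Finite V] (Γ : SimpleGraph V) :
    ∃ l, IsLongestPathList Γ l := by
  have := Fintype.ofFinite V
  have finite : {l | IsPathList Γ l}.Finite := (List.finite_length_le V (Fintype.card V)).subset
    fun l hl => hl.nodup.length_le_card
  obtain ⟨l, hl, hmax⟩ := finite.exists_maximalFor List.length _ ⟨[], IsPathList.nil⟩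
  exact ⟨l, hl, fun m hm => (le_total _ _).elim (hmax hm) id⟩

variable [Fintype V]

theorem IsLongestPathList.mem_of_adj_rotationEndpoint (hl : IsLongestPathList Γ l) :
    ∀ y ∈ rotationEndpoints Γ l, ∀ u, Γ.Adj y u → u ∈ l := by
  intro y hy u hyu
  obtain ⟨l', hr, hl'⟩ := mem_rotationEndpoints.1 hy
  by_contra hu
  have longer := (hl.1.rotatesTo hr).reverse.cons (by rwa [List.head?_reverse]) hyu.symm
    (by simpa [hr.perm.mem_iff] using hu)
  simpa [hr.perm.length_eq] using hl.2 _ longer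

/-- Every subset `S` of `W` with at most `|W| / 4` elements has at least `2|S|` external
neighbours. -/
def IsExpanderOn (Γ : SimpleGraph V) (W : Finset V) : Prop :=
  ∀ S ⊆ W, 4 * #S ≤ #W → 2 * #S ≤ #(externalNeighbors Γ S)

namespace IsExpanderOn

variable {W : Finset V}

theorem mono (hE : IsExpanderOn Γ W) (h : Γ ≤ Γ') : IsExpanderOn Γ' W := fun S hS hcard =>
  (hE S hS hcard).trans <| card_le_card fun u hu => by
    obtain ⟨hu, s, hs, hsu⟩ := mem_externalNeighbors.1 hu
    exact mem_externalNeighbors.2 ⟨hu, s, hs, h hsu⟩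

theorem exists_adj (hE : IsExpanderOn Γ W) (hW : 4 ≤ #W) : ∃ x y, Γ.Adj x y := by
  obtain ⟨x, hx⟩ := card_pos.1 (by lia : 0 < #W)
  have expand := hE {x} (by simpa using hx) (by simpa using hW)
  rw [card_singleton] at expand
  obtain ⟨y, hy⟩ := card_pos.1 (by lia : 0 < #(externalNeighbors Γ {x}))
  obtain ⟨-, s, -, hsy⟩ := mem_externalNeighbors.1 hy
  exact ⟨s, y, hsy⟩

theorem card_lt_four_mul_card_rotationEndpoints (hE : IsExpanderOn Γ W) (hne : l ≠ [])
    (hl : l.Nodup) (hlW : ∀ v ∈ l, v ∈ W)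
    (hclosed : ∀ y ∈ rotationEndpoints Γ l, ∀ u, Γ.Adj y u → u ∈ l) :
    #W < 4 * #(rotationEndpoints Γ l) := by
  by_contra! hcard
  have expand := hE _ (fun y hy => hlW y (mem_of_mem_rotationEndpoints hy)) hcard
  have := card_externalNeighbors_rotationEndpoints_lt hne hl hclosed
  lia

theorem exists_adj_compl_of_two_mul_card_le (hE : IsExpanderOn Γ W) (hW : 12 ≤ #W) {C : Finset V}
    (hC : C ⊆ W) (hne : C.Nonempty) (hcard : 2 * #C ≤ #W) : ∃ x ∈ C, ∃ z ∉ C, Γ.Adj x z := by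
  classical
  by_contra! hisolated
  obtain ⟨S, hSC, hS⟩ := exists_subset_card_eq (min_le_left #C (#W / 4))
  have expand := hE S (hSC.trans hC) (by lia)
  have neighbors_subset : externalNeighbors Γ S ⊆ C \ S := fun u hu => by
    obtain ⟨hu, s, hs, hsu⟩ := mem_externalNeighbors.1 hu
    exact mem_sdiff.2 ⟨by_contra fun huC => hisolated s (hSC hs) u huC hsu, hu⟩
  have card_le := card_le_card neighbors_subset
  rw [card_sdiff_of_subset hSC] at card_le
  have := card_pos.2 hne
  lia

theorem exists_adj_compl (hE : IsExpanderOn Γ W) (hΓ : Γ.support ⊆ W) (hW : 12 ≤ #W)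
    {C : Finset V} (hC : C ⊂ W) (hne : C.Nonempty) : ∃ x ∈ C, ∃ z ∉ C, Γ.Adj x z := by
  classical
  by_cases hcard : 2 * #C ≤ #W
  · exact hE.exists_adj_compl_of_two_mul_card_le hW hC.subset hne hcard
  · have := card_sdiff_of_subset hC.subset
    obtain ⟨z, hz, x, hx, hzx⟩ := hE.exists_adj_compl_of_two_mul_card_le hW (C := W \ C)
      sdiff_subset (sdiff_nonempty.2 hC.2) (by lia)
    refine ⟨x, ?_, z, (mem_sdiff.1 hz).2, hzx.symm⟩
    simpa [mem_coe.1 (hΓ ⟨z, hzx.symm⟩)] using hx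

end IsExpanderOn

open Classical in
/-- The pairs of distinct vertices joined by a longest path of `Γ`. Adding such a pair to a
connected graph closes a cycle, hence creates a longer path or a Hamilton cycle. -/
noncomputable def boosters (Γ : SimpleGraph V) : Finset (Sym2 V) :=
  {e | ∃ y t l, e = s(y, t) ∧ y ≠ t ∧ IsLongestPathList Γ l ∧ l.head? = some y ∧
    l.getLast? = some t}

theorem mem_boosters {e : Sym2 V} : e ∈ boosters Γ ↔ ∃ y t l, e = s(y, t) ∧ y ≠ t ∧
    IsLongestPathList Γ l ∧ l.head? = some y ∧ l.getLast? = some t := by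
  simp [boosters]

theorem card_le_two_mul_card_image_sym2 {α : Type*} [DecidableEq α] (D : Finset (α × α)) :
    #D ≤ 2 * #(D.image fun q => s(q.1, q.2)) := by
  refine card_le_mul_card_image D 2 fun e _ => ?_
  induction e using Sym2.ind with
  | _ x y =>
    refine (card_le_card ?_).trans (card_le_two (a := (x, y)) (b := (y, x)))
    rintro ⟨a, b⟩ hab
    simpa using (mem_filter.1 hab).2

theorem IsLongestPathList.mk_mem_boosters (hl : IsLongestPathList Γ l) (h2 : 2 ≤ l.length)
    (hy : l.head? = some y) (ht : t ∈ rotationEndpoints Γ l) : s(y, t) ∈ boosters Γ := by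
  obtain ⟨m, hm, hmt⟩ := mem_rotationEndpoints.1 ht
  have hmy : m.head? = some y := hm.head?_eq.trans hy
  have hm_longest := hl.rotatesTo hm
  exact mem_boosters.2 ⟨y, t, m, rfl,
    hm_longest.1.head_ne_getLast (hm.perm.length_eq ▸ h2) hmy hmt, hm_longest, hmy, hmt⟩

theorem IsExpanderOn.card_lt_four_mul_card_longest_rotationEndpoints {W : Finset V}
    (hE : IsExpanderOn Γ W) (hΓ : Γ.support ⊆ W) (hl : IsLongestPathList Γ l)
    (hne : l ≠ []) : #W < 4 * #(rotationEndpoints Γ l) :=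
  hE.card_lt_four_mul_card_rotationEndpoints hne hl.1.nodup
    (fun v hv => hΓ (hl.1.mem_support v hv)) hl.mem_of_adj_rotationEndpoint

theorem IsExpanderOn.card_sq_le_card_boosters {W : Finset V} (hE : IsExpanderOn Γ W)
    (hΓ : Γ.support ⊆ W) (hW : 4 ≤ #W) : #W ^ 2 ≤ 32 * #(boosters Γ) := by
  classical
  obtain ⟨l, hl⟩ := exists_isLongestPathList Γ
  obtain ⟨x, z, hxz⟩ := hE.exists_adj hW
  have h2 := hl.two_le_length hxz
  have card_starts := hE.card_lt_four_mul_card_longest_rotationEndpoints hΓ hl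
    (List.ne_nil_of_length_pos (by lia))
  have pairs (y : V) (hy : y ∈ rotationEndpoints Γ l) :
      ∃ T : Finset V, #W < 4 * #T ∧ ∀ t ∈ T, s(y, t) ∈ boosters Γ := by
    obtain ⟨l', hr, hl'⟩ := mem_rotationEndpoints.1 hy
    have h2' : 2 ≤ l'.reverse.length := by simpa [hr.perm.length_eq] using h2
    have hl'_longest := (hl.rotatesTo hr).reverse
    exact ⟨_, hE.card_lt_four_mul_card_longest_rotationEndpoints hΓ hl'_longest
      (List.ne_nil_of_length_pos (by lia)),
      fun t ht => hl'_longest.mk_mem_boosters h2' (by rwa [List.head?_reverse]) ht⟩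
  choose! T hT hTboost using pairs
  set D := (rotationEndpoints Γ l).biUnion fun y => (T y).image (Prod.mk y)
  have card_D : #D = ∑ y ∈ rotationEndpoints Γ l, #(T y) := by
    rw [card_biUnion]
    · exact sum_congr rfl fun y _ => card_image_of_injective _ (Prod.mk_right_injective y)
    · intro y _ z _ hyz
      simp [disjoint_left, hyz.symm]
  have card_D_ge : #(rotationEndpoints Γ l) * #W ≤ 4 * #D := by
    rw [card_D, mul_sum, ← smul_eq_mul]
    exact card_nsmul_le_sum _ _ _ fun y hy => (hT y hy).le
  have image_subset : (D.image fun q => s(q.1, q.2)) ⊆ boosters Γ := fun e he => by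
    simp only [D, mem_image, mem_biUnion] at he
    obtain ⟨_, ⟨y, hy, t, ht, rfl⟩, rfl⟩ := he
    exact hTboost y hy t ht
  have := (card_le_two_mul_card_image_sym2 D).trans
    (Nat.mul_le_mul_left 2 (card_le_card image_subset))
  nlinarith

end Boosters

/-! ### Hamilton paths from boosters -/

section HamiltonPaths

variable {V : Type*} {G Γ Γ' : SimpleGraph V} {W : Finset V} {l : List V} {w y : V}

/-- Every vertex of `W` is the first vertex of a path of `Γ` with vertex set `W`. -/
def HasSpanningPaths (Γ : SimpleGraph V) (W : Finset V) : Prop :=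
  ∀ w ∈ W, ∃ l, IsPathList Γ l ∧ (∀ v, v ∈ l ↔ v ∈ W) ∧ l.head? = some w

/-- For every `w` in `W` there are at least `|W| / 4` vertices `y` such that `G[W]` has a Hamilton
path from `w` to `y`. -/
def HasManyHamiltonPaths [DecidableEq V] (G : SimpleGraph V) (W : Finset V) : Prop :=
  ∀ w, ∀ hw : w ∈ W, ∃ Y : Finset V, ∃ hYW : Y ⊆ W, #W ≤ 4 * #Y ∧ ∀ y, ∀ hy : y ∈ Y,
    ∃ P : (G.induce (W : Set V)).Walk ⟨w, mem_coe.2 hw⟩ ⟨y, mem_coe.2 (hYW hy)⟩,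
      P.IsPath ∧ P.IsHamiltonian

theorem exists_isHamiltonian_walk_induce [DecidableEq V] (hl : l.Nodup)
    (hchain : l.IsChain G.Adj) (hlW : ∀ v, v ∈ l ↔ v ∈ W) (hw : l.head? = some w)
    (hy : l.getLast? = some y) (hwW : w ∈ (W : Set V)) (hyW : y ∈ (W : Set V)) :
    ∃ P : (G.induce (W : Set V)).Walk ⟨w, hwW⟩ ⟨y, hyW⟩, P.IsPath ∧ P.IsHamiltonian := by
  lift l to List (W : Set V) using fun v hv => mem_coe.2 ((hlW v).1 hv)
  have hne : l ≠ [] := by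
    rintro rfl
    simp at hw
  have head_eq : l.head hne = ⟨w, hwW⟩ := Subtype.ext <| by
    rwa [List.head?_map, List.head?_eq_some_head hne, Option.map_some, Option.some_inj] at hw
  have last_eq : l.getLast hne = ⟨y, hyW⟩ := Subtype.ext <| by
    rwa [List.getLast?_map, List.getLast?_eq_some_getLast hne, Option.map_some,
      Option.some_inj] at hy
  have hchain' : l.IsChain (G.induce (W : Set V)).Adj :=
    (List.isChain_map (R := G.Adj) Subtype.val).1 hchain
  have isPath : ((SimpleGraph.Walk.ofSupport l hne hchain').copy head_eq last_eq).IsPath := by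
    rw [SimpleGraph.Walk.isPath_copy, SimpleGraph.Walk.isPath_def,
      SimpleGraph.Walk.support_ofSupport]
    exact List.Nodup.of_map _ hl
  refine ⟨_, isPath, isPath.isHamiltonian_iff.2 fun v => ?_⟩
  simpa using (hlW v).2 v.2

variable [Fintype V]

theorem IsExpanderOn.hasManyHamiltonPaths [DecidableEq V] (hE : IsExpanderOn Γ W) (hΓG : Γ ≤ G)
    (hΓ : Γ.support ⊆ W) (hspan : HasSpanningPaths Γ W) : HasManyHamiltonPaths G W := by
  intro w hw
  obtain ⟨l, hl, hlW, hlw⟩ := hspan w hw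
  have endpoints_subset : rotationEndpoints Γ l ⊆ W := fun y hy =>
    (hlW y).1 (mem_of_mem_rotationEndpoints hy)
  refine ⟨rotationEndpoints Γ l, endpoints_subset, (hE.card_lt_four_mul_card_rotationEndpoints
    (List.ne_nil_of_mem ((hlW w).2 hw)) hl.nodup (fun v => (hlW v).1)
    fun y _ u hyu => (hlW u).2 (hΓ ⟨y, hyu.symm⟩)).le, fun y hy => ?_⟩
  obtain ⟨m, hm, hmy⟩ := mem_rotationEndpoints.1 hy
  have hmG := (hl.rotatesTo hm).mono hΓG
  exact exists_isHamiltonian_walk_induce hmG.nodup hmG.isChain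
    (fun v => hm.perm.mem_iff.trans (hlW v)) (hm.head?_eq.trans hlw) hmy _ _

theorem IsExpanderOn.hasSpanningPaths_or_exists_length_lt (hE : IsExpanderOn Γ W)
    (hΓ : Γ.support ⊆ W) (hW : 12 ≤ #W) (hΓΓ' : Γ ≤ Γ') {e : Sym2 V} (he : e ∈ boosters Γ)
    (he' : e ∈ Γ'.edgeSet) (hl : IsPathList Γ l) :
    HasSpanningPaths Γ' W ∨ ∃ m, IsPathList Γ' m ∧ l.length < m.length := by
  classical
  obtain ⟨y, t, c, rfl, -, hc, hcy, hct⟩ := mem_boosters.1 he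
  have hty : Γ'.Adj t y := (SimpleGraph.mem_edgeSet _).1 he' |>.symm
  have cycle {x : V} (hx : x ∈ c) := (hc.1.mono hΓΓ').exists_perm_head?_eq_some hcy hct hty hx
  have subset : c.toFinset ⊆ W := fun v hv => hΓ (hc.1.mem_support v (List.mem_toFinset.1 hv))
  rcases subset.eq_or_ssubset with heq | hss
  · have mem_iff (v : V) : v ∈ c ↔ v ∈ W := by rw [← heq, List.mem_toFinset]
    refine .inl fun w hw => ?_
    obtain ⟨m, hm, hmc, hmw⟩ := cycle ((mem_iff w).2 hw)
    exact ⟨m, hm, fun v => hmc.mem_iff.trans (mem_iff v), hmw⟩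
  · obtain ⟨x, hx, z, hz, hxz⟩ := hE.exists_adj_compl hΓ hW hss
      ⟨y, List.mem_toFinset.2 (List.mem_of_head? hcy)⟩
    rw [List.mem_toFinset] at hx hz
    obtain ⟨m, hm, hmc, hmx⟩ := cycle hx
    refine .inr ⟨z :: m, hm.cons hmx (hΓΓ' hxz.symm) (by rwa [hmc.mem_iff]), ?_⟩
    simpa [hmc.length_eq] using Nat.lt_succ_of_le (hc.2 l hl)

theorem mem_support_of_mk_mem_boosters {s t : V} (h : s(s, t) ∈ boosters Γ) :
    s ∈ Γ.support ∧ t ∈ Γ.support := by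
  obtain ⟨y, z, c, heq, -, hc, hcy, hcz⟩ := mem_boosters.1 h
  have hy := hc.1.mem_support y (List.mem_of_head? hcy)
  have hz := hc.1.mem_support z (List.mem_of_getLast? hcz)
  rcases Sym2.eq_iff.1 heq with ⟨rfl, rfl⟩ | ⟨rfl, rfl⟩
  exacts [⟨hy, hz⟩, ⟨hz, hy⟩]

open Classical in
theorem exists_le_of_mem_boosters {e : Sym2 V} (hΓG : Γ ≤ G) (he : e ∈ boosters Γ)
    (heG : e ∈ G.edgeSet) :
    ∃ Γ' ≤ G, Γ ≤ Γ' ∧ Γ'.support ⊆ Γ.support ∧ #Γ'.edgeFinset ≤ #Γ.edgeFinset + 1 ∧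
      e ∈ Γ'.edgeSet := by
  induction e using Sym2.ind with
  | _ s t =>
    rw [SimpleGraph.mem_edgeSet] at heG
    obtain ⟨hs, ht⟩ := mem_support_of_mk_mem_boosters he
    refine ⟨Γ ⊔ SimpleGraph.edge s t, sup_le hΓG (G.edge_le_iff.2 (.inr heG)), le_sup_left,
      ?_, ?_, by simp [heG.ne]⟩
    · rintro u ⟨v, huv⟩
      rcases (SimpleGraph.sup_adj ..).1 huv with huv | huv
      · exact ⟨v, huv⟩
      · rcases (SimpleGraph.edge_adj ..).1 huv with ⟨⟨rfl, -⟩ | ⟨rfl, -⟩, -⟩ <;> assumption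
    · simp only [← Set.ncard_coe_finset, SimpleGraph.coe_edgeFinset, SimpleGraph.edgeSet_sup,
        SimpleGraph.edgeSet_edge_of_ne heG.ne]
      exact (Set.ncard_union_le _ _).trans_eq (by rw [Set.ncard_singleton])

open Classical in
theorem IsExpanderOn.exists_hasSpanningPaths (hE : IsExpanderOn Γ W) (hΓG : Γ ≤ G)
    (hΓ : Γ.support ⊆ W) (hW : 12 ≤ #W)
    (hboost : ∀ Γ' ≤ G, Γ ≤ Γ' → Γ'.support ⊆ W →
      #Γ'.edgeFinset ≤ #Γ.edgeFinset + Fintype.card V → ∃ e ∈ boosters Γ', e ∈ G.edgeSet) :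
    ∃ Γ' ≤ G, Γ ≤ Γ' ∧ Γ'.support ⊆ W ∧ HasSpanningPaths Γ' W := by
  -- If the graph never acquires a spanning cycle, each booster lengthens the longest path, which
  -- can happen at most `|V|` times.
  by_contra! hno
  have longer (k : ℕ) : ∃ Γ' ≤ G, Γ ≤ Γ' ∧ Γ'.support ⊆ W ∧
      #Γ'.edgeFinset ≤ #Γ.edgeFinset + k ∧ ∃ l, IsPathList Γ' l ∧ k ≤ l.length := by
    induction k with
    | zero => exact ⟨Γ, hΓG, le_rfl, hΓ, le_rfl, [], .nil, le_rfl⟩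
    | succ k ih =>
      obtain ⟨Γ₁, hΓ₁G, hΓΓ₁, hΓ₁W, hcard₁, l, hl, hk⟩ := ih
      have := hl.nodup.length_le_card
      obtain ⟨e, he, heG⟩ := hboost Γ₁ hΓ₁G hΓΓ₁ hΓ₁W (by lia)
      obtain ⟨Γ₂, hΓ₂G, hΓ₁₂, hsupp, hcard₂, he₂⟩ := exists_le_of_mem_boosters hΓ₁G he heG
      rcases (hE.mono hΓΓ₁).hasSpanningPaths_or_exists_length_lt hΓ₁W hW hΓ₁₂ he he₂ hl with
        hspan | ⟨m, hm, hlm⟩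
      · exact (hno Γ₂ hΓ₂G (hΓΓ₁.trans hΓ₁₂) (hsupp.trans hΓ₁W) hspan).elim
      · exact ⟨Γ₂, hΓ₂G, hΓΓ₁.trans hΓ₁₂, hsupp.trans hΓ₁W, by lia, m, hm, by lia⟩
  obtain ⟨Γ', -, -, -, -, l, hl, hlen⟩ := longer (Fintype.card V + 1)
  have := hl.nodup.length_le_card
  lia

end HamiltonPaths

/-! ### Expansion from pseudorandomness -/

section Pseudorandom

variable {V : Type*} {G Γ R : SimpleGraph V}

/-- The vertices of `X` lie pairwise at distance at least five, and no cycle of length three or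
four passes through any of them. -/
structure IsScattered (G : SimpleGraph V) (X : Set V) : Prop where
  five_le_length : ∀ x ∈ X, ∀ y ∈ X, x ≠ y → ∀ w : G.Walk x y, 5 ≤ w.length
  five_le_length_of_isCycle : ∀ x ∈ X, ∀ c : G.Walk x x, c.IsCycle → 5 ≤ c.length

namespace IsScattered

variable {X Y : Set V} {x y u a b : V}

theorem mono (h : IsScattered G X) (hΓ : Γ ≤ G) (hYX : Y ⊆ X) : IsScattered Γ Y where
  five_le_length x hx y hy hxy w := by
    simpa using h.five_le_length x (hYX hx) y (hYX hy) hxy (w.mapLe hΓ)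
  five_le_length_of_isCycle x hx c hc := by
    simpa using h.five_le_length_of_isCycle x (hYX hx) (c.mapLe hΓ) (hc.mapLe hΓ)

theorem eq_of_length_lt_five (h : IsScattered G X) (hx : x ∈ X) (hy : y ∈ X) (w : G.Walk x y)
    (hw : w.length < 5) : x = y :=
  by_contra fun hxy => hw.not_ge (h.five_le_length x hx y hy hxy w)

theorem eq_of_adj_adj (h : IsScattered G X) (hx : x ∈ X) (hy : y ∈ X) (hxu : G.Adj x u)
    (huy : G.Adj u y) : x = y :=
  h.eq_of_length_lt_five hx hy (.cons hxu (.cons huy .nil)) (by simp)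

theorem not_adj_of_adj_adj (h : IsScattered G X) (hx : x ∈ X) (hxa : G.Adj x a)
    (hxb : G.Adj x b) : ¬ G.Adj a b := fun hab => by
  have isCycle : (SimpleGraph.Walk.cons hxa (.cons hab (.cons hxb.symm .nil))).IsCycle := by
    simp [SimpleGraph.Walk.cons_isCycle_iff, hxa.ne', hxb.ne', hab.ne, hxb.ne, hxa.ne]
  simpa using h.five_le_length_of_isCycle x hx _ isCycle

theorem eq_of_common_neighbors (h : IsScattered G X) (hx : x ∈ X) (hxa : G.Adj x a)
    (hxb : G.Adj x b) (hau : G.Adj a u) (hub : G.Adj u b) (hxu : x ≠ u) : a = b := by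
  by_contra hab
  have isCycle : (SimpleGraph.Walk.cons hxa (.cons hau (.cons hub (.cons hxb.symm .nil)))).IsCycle
      := by
    simp [SimpleGraph.Walk.cons_isCycle_iff, hxa.ne', hxb.ne', hau.ne, hub.ne, hab, hxu, hxu.symm,
      hxa.ne, hxb.ne]
  simpa using h.five_le_length_of_isCycle x hx _ isCycle

theorem eq_of_adj_of_near (h : IsScattered G X) (hx : x ∈ X) (hy : y ∈ X) (hu : u ∉ X)
    (hxa : G.Adj x a) (hyb : G.Adj y b) (hau : a = u ∨ G.Adj a u) (hub : u = b ∨ G.Adj u b) :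
    a = b := by
  have walk {c d : V} (hcd : c = d ∨ G.Adj c d) : ∃ w : G.Walk c d, w.length ≤ 1 := by
    rcases hcd with rfl | hcd
    exacts [⟨.nil, by simp⟩, ⟨.cons hcd .nil, by simp⟩]
  obtain ⟨w₁, hw₁⟩ := walk hau
  obtain ⟨w₂, hw₂⟩ := walk hub
  obtain rfl : x = y := h.eq_of_length_lt_five hx hy
    (.cons hxa (w₁.append (w₂.append (.cons hyb.symm .nil)))) (by simp; lia)
  have hxu : x ≠ u := by
    rintro rfl
    exact hu hx
  rcases hau with rfl | hau <;> rcases hub with rfl | hub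
  · rfl
  · exact (h.not_adj_of_adj_adj hx hxa hyb hub).elim
  · exact (h.not_adj_of_adj_adj hx hxa hyb hau).elim
  · exact h.eq_of_common_neighbors hx hxa hyb hau hub hxu

end IsScattered

variable [Fintype V]

theorem IsScattered.two_mul_card_le_card_externalNeighbors [DecidableRel Γ.Adj] {X : Finset V}
    (h : IsScattered Γ X) (hdeg : ∀ x ∈ X, 2 ≤ Γ.degree x) :
    2 * #X ≤ #(externalNeighbors Γ X) := by
  classical
  have disjoint : (X : Set V).PairwiseDisjoint (Γ.neighborFinset ·) := fun x hx y hy hxy =>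
    disjoint_left.2 fun u hxu hyu => hxy <| h.eq_of_adj_adj hx hy
      ((Γ.mem_neighborFinset _ _).1 hxu) ((Γ.mem_neighborFinset _ _).1 hyu).symm
  have subset : X.biUnion (Γ.neighborFinset ·) ⊆ externalNeighbors Γ X := fun u hu => by
    obtain ⟨x, hx, hxu⟩ := mem_biUnion.1 hu
    rw [SimpleGraph.mem_neighborFinset] at hxu
    exact mem_externalNeighbors.2 ⟨fun huX => hxu.ne
      (h.eq_of_length_lt_five hx huX (.cons hxu .nil) (by simp)), x, hx, hxu⟩
  calc 2 * #X = #X • 2 := by simp [mul_comm]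
    _ ≤ ∑ x ∈ X, Γ.degree x := card_nsmul_le_sum _ _ _ hdeg
    _ = #(X.biUnion (Γ.neighborFinset ·)) := (card_biUnion disjoint).symm
    _ ≤ _ := card_le_card subset

open Classical in
theorem IsScattered.card_externalNeighbors_inter_le {X T : Finset V} (h : IsScattered Γ X)
    (hXT : Disjoint X T) :
    #(externalNeighbors Γ X ∩ (T ∪ externalNeighbors Γ T)) ≤ #T := by
  refine card_le_card_of_forall_subsingleton (fun a u => u = a ∨ Γ.Adj u a) (fun a ha => ?_) ?_
  · rcases mem_union.1 (mem_inter.1 ha).2 with haT | haT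
    · exact ⟨a, haT, .inl rfl⟩
    · obtain ⟨-, u, hu, hua⟩ := mem_externalNeighbors.1 haT
      exact ⟨u, hu, .inr hua⟩
  · rintro u hu a ⟨ha, hau⟩ b ⟨hb, hbu⟩
    obtain ⟨-, x, hx, hxa⟩ := mem_externalNeighbors.1 (mem_inter.1 ha).1
    obtain ⟨-, y, hy, hyb⟩ := mem_externalNeighbors.1 (mem_inter.1 hb).1
    exact h.eq_of_adj_of_near hx hy (disjoint_right.1 hXT hu) hxa hyb
      (hau.imp Eq.symm SimpleGraph.Adj.symm) hbu

open Classical in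
theorem IsScattered.card_inter_externalNeighbors_le {X T : Finset V} (h : IsScattered Γ X) :
    #(externalNeighbors Γ T ∩ X) ≤ #T := by
  refine card_le_card_of_forall_subsingleton (fun x u => Γ.Adj u x) (fun x hx => ?_) ?_
  · exact (mem_externalNeighbors.1 (mem_inter.1 hx).1).2
  · rintro u - x ⟨hx, hux⟩ y ⟨hy, huy⟩
    exact h.eq_of_adj_adj (mem_inter.1 hx).2 (mem_inter.1 hy).2 hux.symm huy

open Classical in
theorem IsScattered.two_mul_card_union_le {X T : Finset V} (h : IsScattered Γ X)
    (hXT : Disjoint X T) (hX : 2 * #X ≤ #(externalNeighbors Γ X))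
    (hT : 4 * #T ≤ #(externalNeighbors Γ T)) :
    2 * #(X ∪ T) ≤ #(externalNeighbors Γ (X ∪ T)) := by
  have subset : (externalNeighbors Γ X \ (T ∪ externalNeighbors Γ T)) ∪
      (externalNeighbors Γ T \ X) ⊆ externalNeighbors Γ (X ∪ T) := fun u => by
    simp only [mem_union, Finset.mem_sdiff, mem_externalNeighbors]
    grind
  have disjoint : Disjoint (externalNeighbors Γ X \ (T ∪ externalNeighbors Γ T))
      (externalNeighbors Γ T \ X) :=
    disjoint_left.2 fun u hu hu' => (mem_sdiff.1 hu).2 (mem_union_right _ (mem_sdiff.1 hu').1)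
  have card_le := card_le_card subset
  rw [card_union_of_disjoint disjoint] at card_le
  have := card_union_of_disjoint hXT
  have := card_sdiff_add_card_inter (externalNeighbors Γ X) (T ∪ externalNeighbors Γ T)
  have := card_sdiff_add_card_inter (externalNeighbors Γ T) X
  have := h.card_externalNeighbors_inter_le hXT
  have := h.card_inter_externalNeighbors_le (T := T)
  lia

open Classical in
/-- Every nonempty set of at most `m` vertices spans fewer than `c` edges per vertex. -/
def IsLocallySparse (G : SimpleGraph V) (m c : ℝ) : Prop :=
  ∀ U : Finset V, U.Nonempty → (#U : ℝ) ≤ m → (#(G.edgeFinset ∩ U.sym2) : ℝ) < c * #U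

open Classical in
theorem IsLocallySparse.mono {m c : ℝ} (h : IsLocallySparse G m c) (hΓ : Γ ≤ G) :
    IsLocallySparse Γ m c := fun U hU hUm =>
  (Nat.cast_le.2 (card_le_card (inter_subset_inter_right
    (SimpleGraph.edgeFinset_mono hΓ)))).trans_lt (h U hU hUm)

open Classical in
theorem sum_degree_le_two_mul_card_edgeFinset_inter_sym2 (S : Finset V) :
    ∑ v ∈ S, Γ.degree v ≤ 2 * #(Γ.edgeFinset ∩ (S ∪ externalNeighbors Γ S).sym2) := by
  set D : Finset (V × V) := {q | q.1 ∈ S ∧ Γ.Adj q.1 q.2}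
  have card_D : ∑ v ∈ S, Γ.degree v = #D := by
    rw [card_eq_sum_card_fiberwise (f := Prod.fst) (t := S) fun q hq => (by simp_all [D])]
    refine sum_congr rfl fun v hv => card_bij (fun u _ => (v, u)) ?_ ?_ ?_
    · simp [D, hv]
    · simp
    · rintro ⟨a, u⟩ hau
      obtain ⟨⟨-, hadj⟩, rfl⟩ : (a ∈ S ∧ Γ.Adj a u) ∧ a = v := by simpa [D] using hau
      exact ⟨u, by simpa using hadj, rfl⟩
  rw [card_D]
  refine (card_le_two_mul_card_image_sym2 D).trans (Nat.mul_le_mul_left 2 (card_le_card ?_))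
  intro e he
  obtain ⟨⟨v, u⟩, hvu, rfl⟩ := mem_image.1 he
  obtain ⟨hv, hadj⟩ : v ∈ S ∧ Γ.Adj v u := by simpa [D] using hvu
  have hu : u ∈ S ∪ externalNeighbors Γ S := by
    by_cases huS : u ∈ S
    · exact mem_union_left _ huS
    · exact mem_union_right _ (mem_externalNeighbors.2 ⟨huS, v, hv, hadj⟩)
  exact mem_inter.2 ⟨SimpleGraph.mem_edgeFinset.2 hadj,
    mk_mem_sym2_iff.2 ⟨mem_union_left _ hv, hu⟩⟩

open Classical in
theorem IsLocallySparse.four_mul_card_le_card_externalNeighbors {m D : ℝ}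
    (h : IsLocallySparse Γ (5 * m) (D / 10)) {S : Finset V}
    (hS : (#S : ℝ) ≤ m) (hdeg : ∀ v ∈ S, D ≤ Γ.degree v) : 4 * #S ≤ #(externalNeighbors Γ S) := by
  by_contra! hsmall
  have hne : S.Nonempty := card_pos.1 (by lia)
  set U := S ∪ externalNeighbors Γ S
  have card_U : #U ≤ 5 * #S := (card_union_le _ _).trans (by lia)
  have card_U_pos : 0 < #U := card_pos.2 (hne.mono subset_union_left)
  have hUS : (#U : ℝ) ≤ 5 * #S := mod_cast card_U
  have sparse := h U (card_pos.1 card_U_pos) (by linarith)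
  have dense : D * #S ≤ 2 * #(Γ.edgeFinset ∩ U.sym2) := calc
    D * #S = #S • D := by rw [nsmul_eq_mul, mul_comm]
    _ ≤ ∑ v ∈ S, (Γ.degree v : ℝ) := card_nsmul_le_sum _ _ _ hdeg
    _ ≤ 2 * #(Γ.edgeFinset ∩ U.sym2) := by
      exact_mod_cast sum_degree_le_two_mul_card_edgeFinset_inter_sym2 S
  have hD : 0 < D := by
    have : 0 < D / 10 * #U := (Nat.cast_nonneg _).trans_lt sparse
    have := pos_of_mul_pos_left this (Nat.cast_nonneg _)
    linarith
  nlinarith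

/-- Any two disjoint sets of at least `m` vertices are joined by an edge. -/
def JoinsDisjointSets (R : SimpleGraph V) (m : ℝ) : Prop :=
  ∀ A B : Finset V, Disjoint A B → m ≤ (#A : ℝ) → m ≤ (#B : ℝ) → ∃ a ∈ A, ∃ b ∈ B, R.Adj a b

theorem JoinsDisjointSets.two_mul_card_le_card_externalNeighbors {W S : Finset V} {m : ℝ}
    (h : JoinsDisjointSets R m) (hR : ∀ a ∈ W, ∀ b ∈ W, R.Adj a b → Γ.Adj a b)
    (hSW : S ⊆ W) (hSm : m ≤ (#S : ℝ)) (hS : 4 * #S ≤ #W) : 2 * #S ≤ #(externalNeighbors Γ S) := by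
  classical
  by_contra! hsmall
  have := card_union_le S (externalNeighbors Γ S)
  have := le_card_sdiff (S ∪ externalNeighbors Γ S) W
  obtain ⟨a, ha, b, hb, hab⟩ := h S (W \ (S ∪ externalNeighbors Γ S))
    (disjoint_sdiff.mono_left subset_union_left) hSm
      (hSm.trans (Nat.cast_le.2 (by lia)))
  rw [Finset.mem_sdiff, mem_union, not_or] at hb
  exact hb.2.2 (mem_externalNeighbors.2 ⟨hb.2.1, a, ha, hR a (hSW ha) b hb.1 hab⟩)

open Classical in
theorem isExpanderOn_of_isLocallySparse {W : Finset V} {m D : ℝ}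
    (hscattered : IsScattered Γ {v | v ∈ W ∧ (Γ.degree v : ℝ) < D})
    (hdeg : ∀ v ∈ W, Γ.degree v < D → 2 ≤ Γ.degree v)
    (hsparse : IsLocallySparse Γ (5 * m) (D / 10)) (hjoin : JoinsDisjointSets R m)
    (hR : ∀ a ∈ W, ∀ b ∈ W, R.Adj a b → Γ.Adj a b) : IsExpanderOn Γ W := by
  intro S hSW hS
  rcases le_total m (#S : ℝ) with hm | hm
  · exact hjoin.two_mul_card_le_card_externalNeighbors hR hSW hm hS
  set X := S.filter fun v => (Γ.degree v : ℝ) < D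
  set T := S.filter fun v => ¬ (Γ.degree v : ℝ) < D
  have scattered_X : IsScattered Γ (X : Set V) := hscattered.mono le_rfl fun v hv =>
    ⟨hSW (mem_filter.1 hv).1, (mem_filter.1 hv).2⟩
  have expand_X := scattered_X.two_mul_card_le_card_externalNeighbors fun v hv =>
    hdeg v (hSW (mem_filter.1 hv).1) (mem_filter.1 hv).2
  have expand_T : 4 * #T ≤ #(externalNeighbors Γ T) :=
    hsparse.four_mul_card_le_card_externalNeighbors
      ((Nat.cast_le.2 (card_le_card (filter_subset _ _))).trans hm)
      fun v hv => not_lt.1 (mem_filter.1 hv).2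
  have hXT : X ∪ T = S := filter_union_filter_not_eq _ S
  rw [← hXT]
  exact scattered_X.two_mul_card_union_le (disjoint_filter_filter_not _ _ _) expand_X expand_T

open Classical in
theorem exists_subgraph_of_neighbors (hR : R ≤ G) {W : Finset V} {Q : V → Finset V}
    (hQ : ∀ v, Q v ⊆ G.neighborFinset v ∩ W) :
    ∃ Γ ≤ G, Γ.support ⊆ W ∧ #Γ.edgeFinset ≤ #R.edgeFinset + ∑ v ∈ W, #(Q v) ∧
      (∀ v ∈ W, Q v ⊆ Γ.neighborFinset v) ∧ ∀ a ∈ W, ∀ b ∈ W, R.Adj a b → Γ.Adj a b := by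
  have adj_of_mem {v u : V} (hu : u ∈ Q v) : G.Adj v u ∧ u ∈ W := by simpa using hQ v hu
  obtain ⟨Γ, adj_iff⟩ : ∃ Γ : SimpleGraph V, ∀ u v, Γ.Adj u v ↔ u ≠ v ∧
      (u ∈ W ∧ v ∈ W ∧ (R.Adj u v ∨ v ∈ Q u) ∨ v ∈ W ∧ u ∈ W ∧ (R.Adj v u ∨ u ∈ Q v)) :=
    ⟨.fromRel fun u v => u ∈ W ∧ v ∈ W ∧ (R.Adj u v ∨ v ∈ Q u), fun _ _ => Iff.rfl⟩
  have edges_subset : Γ.edgeFinset ⊆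
      R.edgeFinset ∪ W.biUnion fun v => (Q v).image fun u => s(v, u) := fun e he => by
    induction e using Sym2.ind with
    | _ u v =>
      obtain ⟨-, ⟨hu, -, h | h⟩ | ⟨hv, -, h | h⟩⟩ :=
        (adj_iff u v).1 ((SimpleGraph.mem_edgeSet _).1 (SimpleGraph.mem_edgeFinset.1 he))
      · exact mem_union_left _ (SimpleGraph.mem_edgeFinset.2 h)
      · exact mem_union_right _ (mem_biUnion.2 ⟨u, hu, mem_image_of_mem _ h⟩)
      · exact mem_union_left _ (SimpleGraph.mem_edgeFinset.2 h.symm)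
      · exact mem_union_right _ (mem_biUnion.2 ⟨v, hv, mem_image.2 ⟨u, h, Sym2.eq_swap⟩⟩)
  refine ⟨Γ, fun u v huv => ?_, ?_, ?_, fun v hv u hu => ?_, fun a ha b hb hab =>
    (adj_iff a b).2 ⟨hab.ne, .inl ⟨ha, hb, .inl hab⟩⟩⟩
  · obtain ⟨-, ⟨-, -, h | h⟩ | ⟨-, -, h | h⟩⟩ := (adj_iff u v).1 huv
    exacts [hR h, (adj_of_mem h).1, hR h.symm, (adj_of_mem h).1.symm]
  · rintro u ⟨v, huv⟩
    obtain ⟨-, ⟨hu, -⟩ | ⟨-, hu, -⟩⟩ := (adj_iff u v).1 huv <;> exact hu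
  · refine (card_le_card edges_subset).trans ((card_union_le _ _).trans (Nat.add_le_add_left ?_ _))
    exact card_biUnion_le.trans (sum_le_sum fun v _ => card_image_le)
  · obtain ⟨hvu, huW⟩ := adj_of_mem hu
    exact (SimpleGraph.mem_neighborFinset ..).2 ((adj_iff v u).2 ⟨hvu.ne, .inl ⟨hv, huW, .inr hu⟩⟩)

open Classical in
theorem exists_sparse_subgraph (hR : R ≤ G) {W : Finset V} {D : ℝ}
    (hW : ∀ v ∈ W, min (G.degree v : ℝ) D ≤ #(G.neighborFinset v ∩ W)) :
    ∃ Γ ≤ G, Γ.support ⊆ W ∧ #Γ.edgeFinset ≤ #R.edgeFinset + #W * ⌈D⌉₊ ∧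
      (∀ v ∈ W, min (G.degree v : ℝ) D ≤ Γ.degree v) ∧
      ∀ a ∈ W, ∀ b ∈ W, R.Adj a b → Γ.Adj a b := by
  choose Q hQ hQcard using fun v =>
    exists_subset_card_eq (min_le_right ⌈D⌉₊ #(G.neighborFinset v ∩ W))
  obtain ⟨Γ, hΓG, hΓW, hcard, hQΓ, hRΓ⟩ := exists_subgraph_of_neighbors hR hQ
  refine ⟨Γ, hΓG, hΓW, hcard.trans (Nat.add_le_add_left ?_ _), fun v hv => ?_, hRΓ⟩
  · exact sum_le_card_nsmul _ _ _ fun v _ => (hQcard v).trans_le (min_le_left _ _)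
  · calc min (G.degree v : ℝ) D ≤ #(Q v) := by
          rw [hQcard, Nat.cast_min]
          exact le_min ((min_le_right _ _).trans (Nat.le_ceil D)) (hW v hv)
      _ ≤ Γ.degree v := Nat.cast_le.2 (card_le_card (hQΓ v hv))

open Classical in
/-- The pseudorandom properties of `G` that turn vertex sets of large minimum degree into
expanders. `R` is a sparse subgraph of `G` which already joins large sets, `D` is the threshold
separating low degrees from high ones, and `m` separates small sets from large ones. -/
structure IsPseudorandom (G R : SimpleGraph V) (D m : ℝ) : Prop where
  le : R ≤ G
  two_le_degree : ∀ v, 2 ≤ G.degree v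
  isScattered : IsScattered G {v | (G.degree v : ℝ) < D}
  isLocallySparse : IsLocallySparse G (5 * m) (D / 10)
  joinsDisjointSets : JoinsDisjointSets R m

open Classical in
theorem IsPseudorandom.exists_isExpanderOn {W : Finset V} {D m : ℝ}
    (h : IsPseudorandom G R D m)
    (hW : ∀ v ∈ W, min (G.degree v : ℝ) D ≤ #(G.neighborFinset v ∩ W)) :
    ∃ Γ ≤ G, Γ.support ⊆ W ∧ #Γ.edgeFinset ≤ #R.edgeFinset + #W * ⌈D⌉₊ ∧ IsExpanderOn Γ W := by
  obtain ⟨Γ, hΓG, hΓW, hcard, hdeg, hR⟩ := exists_sparse_subgraph h.le hW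
  have low {v : V} (hv : v ∈ W) (hvD : (Γ.degree v : ℝ) < D) :
      (G.degree v : ℝ) < D ∧ G.degree v ≤ Γ.degree v := by
    have := hdeg v hv
    rcases min_le_iff.1 this with hle | hle
    · exact ⟨hle.trans_lt hvD, Nat.cast_le.1 hle⟩
    · exact (hle.not_gt hvD).elim
  exact ⟨Γ, hΓG, hΓW, hcard, isExpanderOn_of_isLocallySparse
    (h.isScattered.mono hΓG fun v hv => (low hv.1 hv.2).1)
    (fun v hv hvD => (h.two_le_degree v).trans (low hv hvD).2)
    (h.isLocallySparse.mono hΓG) h.joinsDisjointSets hR⟩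

open Classical in
/-- Every subgraph of `G` which has at most `k` edges and at least `b` boosters has a booster
in `G`. -/
def ContainsBoosters (G : SimpleGraph V) (k b : ℝ) : Prop :=
  ∀ Γ ≤ G, (#Γ.edgeFinset : ℝ) ≤ k → b ≤ #(boosters Γ) → ∃ e ∈ boosters Γ, e ∈ G.edgeSet

open Classical in
theorem IsPseudorandom.hasManyHamiltonPaths {W : Finset V} {D m k b : ℝ}
    (h : IsPseudorandom G R D m) (hboost : ContainsBoosters G k b)
    (hk : (#R.edgeFinset : ℝ) + #W * ⌈D⌉₊ + Fintype.card V ≤ k) (hb : 32 * b ≤ #W ^ 2)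
    (hcard : 12 ≤ #W)
    (hW : ∀ v ∈ W, min (G.degree v : ℝ) D ≤ #(G.neighborFinset v ∩ W)) :
    HasManyHamiltonPaths G W := by
  obtain ⟨Γ, hΓG, hΓW, hΓcard, hE⟩ := h.exists_isExpanderOn hW
  obtain ⟨Γ', hΓ'G, hΓΓ', hΓ'W, hspan⟩ := hE.exists_hasSpanningPaths hΓG hΓW hcard
    fun Γ' hΓ'G hΓΓ' hΓ'W hΓ'card => by
      have few_edges : (#Γ'.edgeFinset : ℝ) ≤ #R.edgeFinset + #W * ⌈D⌉₊ + Fintype.card V :=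
        mod_cast hΓ'card.trans (Nat.add_le_add_right hΓcard _)
      have many_boosters : (#W : ℝ) ^ 2 ≤ 32 * #(boosters Γ') :=
        mod_cast (hE.mono hΓΓ').card_sq_le_card_boosters hΓ'W (by lia)
      exact hboost Γ' hΓ'G (few_edges.trans hk) (by linarith)
  exact (hE.mono hΓΓ').hasManyHamiltonPaths hΓ'G hΓ'W hspan

end Pseudorandom

/-! ### Union bounds for local structures -/

section CrossEdges

variable {V : Type*} [DecidableEq V] {G K : SimpleGraph V} {A B : Finset V}

open Classical in
/-- The edges of `K` joining `A` to `B`, as unordered pairs. -/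
noncomputable def crossEdges (K : SimpleGraph V) (A B : Finset V) : Finset (Sym2 V) :=
  (K.interedges A B).image fun q => s(q.1, q.2)

theorem mk_mem_crossEdges_iff {a b : V} :
    s(a, b) ∈ crossEdges K A B ↔ K.Adj a b ∧ (a ∈ A ∧ b ∈ B ∨ b ∈ A ∧ a ∈ B) := by
  simp only [crossEdges, mem_image, SimpleGraph.mem_interedges_iff, Prod.exists, Sym2.eq_iff]
  constructor
  · rintro ⟨x, y, ⟨hx, hy, hxy⟩, ⟨rfl, rfl⟩ | ⟨rfl, rfl⟩⟩
    · exact ⟨hxy, .inl ⟨hx, hy⟩⟩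
    · exact ⟨hxy.symm, .inr ⟨hx, hy⟩⟩
  · rintro ⟨hab, ⟨ha, hb⟩ | ⟨hb, ha⟩⟩
    · exact ⟨a, b, ⟨ha, hb, hab⟩, .inl ⟨rfl, rfl⟩⟩
    · exact ⟨b, a, ⟨hb, ha, hab.symm⟩, .inr ⟨rfl, rfl⟩⟩

open Classical in
theorem card_crossEdges (hAB : Disjoint A B) : #(crossEdges K A B) = #(K.interedges A B) := by
  refine card_image_of_injOn fun ⟨a, b⟩ hab ⟨a', b'⟩ hab' he => ?_
  simp only [mem_coe, SimpleGraph.mem_interedges_iff] at hab hab'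
  obtain ⟨rfl, rfl⟩ | ⟨rfl, rfl⟩ := Sym2.eq_iff.1 he
  · rfl
  · exact absurd hab'.2.1 (disjoint_left.1 hAB hab.1)

theorem card_crossEdges_top (hAB : Disjoint A B) : #(crossEdges ⊤ A B) = #A * #B := by
  rw [card_crossEdges hAB, ← card_product]
  congr 1
  ext ⟨a, b⟩
  simpa [SimpleGraph.mem_interedges_iff] using fun ha hb => disjoint_iff_ne.1 hAB a ha b hb

theorem crossEdges_subset_edgeFinset [Fintype K.edgeSet] :
    crossEdges K A B ⊆ K.edgeFinset := fun e => by
  induction e with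
  | h a b => simpa using fun h => (mk_mem_crossEdges_iff.1 h).1

open Classical in
theorem edgeFinset_inter_crossEdges [Fintype V] :
    G.edgeFinset ∩ crossEdges K A B = crossEdges (G ⊓ K) A B := by
  ext e
  induction e with
  | h a b => simp [mk_mem_crossEdges_iff, and_assoc]

open Classical in
theorem card_crossEdges_le_sum_degree [Fintype V] : #(crossEdges K A B) ≤ ∑ a ∈ A, K.degree a := by
  simp only [← SimpleGraph.card_neighborFinset_eq_degree]
  rw [← card_sigma]
  refine (card_le_card fun e he => ?_).trans
    (card_image_le (s := A.sigma fun a => K.neighborFinset a) (f := fun q => s(q.1, q.2)))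
  obtain ⟨⟨a, b⟩, hab, rfl⟩ := mem_image.1 he
  rw [SimpleGraph.mem_interedges_iff] at hab
  exact mem_image.2 ⟨⟨a, b⟩, by simp [hab.1, hab.2.2], rfl⟩

end CrossEdges

section LowDegree

variable {n : ℕ} {p : ℝ}

open Classical in
theorem gnpProb_degree_le_le (h0 : 0 ≤ p) (h1 : p ≤ 1) {t : ℝ} (ht : 0 ≤ t) (r : ℝ)
    {F X : Finset (Fin n)} {A : Finset (Sym2 (Fin n))} (hXF : X ⊆ F) (hAF : A ⊆ F.sym2) :
    gnpProb n p (fun G => A ⊆ G.edgeFinset ∧ ∀ x ∈ X, (G.degree x : ℝ) ≤ r)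
      ≤ p ^ #A * Real.exp (t * (#X * r) - p * (1 - Real.exp (-t)) * (#X * (n - #F))) := by
  have card_star : (#(crossEdges ⊤ X Fᶜ) : ℝ) = #X * (n - #F) := by
    rw [card_crossEdges_top (disjoint_compl_right.mono_left hXF), card_compl, Fintype.card_fin,
      Nat.cast_mul, Nat.cast_sub (by simpa using card_le_univ F)]
  have disjoint_star : Disjoint A (crossEdges ⊤ X Fᶜ) := disjoint_left.2 fun e heA => by
    have he := mem_sym2_iff.1 (hAF heA)
    induction e with
    | h a b => simp_all [mk_mem_crossEdges_iff]
  rw [← card_star]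
  refine (gnpProb_mono h0 h1 fun G hG => ⟨hG.1, ?_⟩).trans
    (gnpProb_card_inter_le h0 h1 ht (#X * r) crossEdges_subset_edgeFinset disjoint_star)
  calc (#(G.edgeFinset ∩ crossEdges ⊤ X Fᶜ) : ℝ) ≤ ∑ x ∈ X, (G.degree x : ℝ) := by
        rw [edgeFinset_inter_crossEdges, inf_top_eq]
        exact_mod_cast card_crossEdges_le_sum_degree
    _ ≤ ∑ _x ∈ X, r := sum_le_sum hG.2
    _ = #X * r := by simp

open Classical in
theorem gnpProb_not_two_le_degree_le (h0 : 0 ≤ p) (h1 : p ≤ 1) {t : ℝ} (ht : 0 ≤ t) :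
    gnpProb n p (fun G => ¬ ∀ v, 2 ≤ G.degree v)
      ≤ n * Real.exp (t - p * (1 - Real.exp (-t)) * (n - 1)) := by
  refine (gnpProb_le_sum h0 h1 univ
    (Q := fun v G => ∅ ⊆ G.edgeFinset ∧ ∀ x ∈ ({v} : Finset (Fin n)), (G.degree x : ℝ) ≤ 1)
    fun G hG => ?_).trans ((sum_le_card_nsmul _ _
      (Real.exp (t - p * (1 - Real.exp (-t)) * (n - 1))) fun v _ => ?_).trans_eq (by simp))
  · push Not at hG
    obtain ⟨v, hv⟩ := hG
    exact ⟨v, mem_univ v, empty_subset _, by simpa using Nat.le_of_lt_succ hv⟩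
  · simpa using gnpProb_degree_le_le (F := {v}) h0 h1 ht 1 subset_rfl (empty_subset _)

open Classical in
/-- `G` has a set of `f` vertices that spans at least `a` edges and contains at least `b` vertices
of degree at most `D`. -/
def HasLowDegreeConfiguration {V : Type*} [Fintype V] (G : SimpleGraph V) (D : ℝ) (f a b : ℕ) :
    Prop :=
  ∃ F : Finset V, #F = f ∧ (∃ A ⊆ F.sym2, #A = a ∧ A ⊆ G.edgeFinset) ∧
    ∃ X ⊆ F, #X = b ∧ ∀ x ∈ X, (G.degree x : ℝ) ≤ D

open Classical in
theorem gnpProb_hasLowDegreeConfiguration_le (h0 : 0 ≤ p) (h1 : p ≤ 1) {t : ℝ} (ht : 0 ≤ t)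
    (D : ℝ) (f a b : ℕ) :
    gnpProb n p (fun G => HasLowDegreeConfiguration G D f a b)
      ≤ n ^ f * (((f + 1).choose 2).choose a * f.choose b)
        * (p ^ a * Real.exp (t * (b * D) - p * (1 - Real.exp (-t)) * (b * (n - f)))) := by
  let s : Finset (Σ _ : Finset (Fin n), Finset (Sym2 (Fin n)) × Finset (Fin n)) :=
    (powersetCard f univ).sigma fun F => powersetCard a F.sym2 ×ˢ powersetCard b F
  have card_s : #s = n.choose f * (((f + 1).choose 2).choose a * f.choose b) := by
    rw [card_sigma, sum_const_nat (m := ((f + 1).choose 2).choose a * f.choose b),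
      card_powersetCard, card_univ, Fintype.card_fin]
    intro F hF
    rw [card_product, card_powersetCard, card_powersetCard, card_sym2, (mem_powersetCard.1 hF).2]
  refine (gnpProb_le_sum h0 h1 s
    (Q := fun q G => q.2.1 ⊆ G.edgeFinset ∧ ∀ x ∈ q.2.2, (G.degree x : ℝ) ≤ D)
    fun G hG => ?_).trans ((sum_le_card_nsmul s _
      (p ^ a * Real.exp (t * (b * D) - p * (1 - Real.exp (-t)) * (b * (n - f))))
      fun q hq => ?_).trans ?_)
  · obtain ⟨F, hF, ⟨A, hAF, hA, hAG⟩, X, hXF, hX, hdeg⟩ := hG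
    exact ⟨⟨F, A, X⟩, by simp [s, mem_powersetCard, *], hAG, hdeg⟩
  · obtain ⟨hF, hA, hX⟩ :
        #q.1 = f ∧ (q.2.1 ⊆ q.1.sym2 ∧ #q.2.1 = a) ∧ q.2.2 ⊆ q.1 ∧ #q.2.2 = b := by
      simpa [s, mem_powersetCard] using hq
    simpa [hF, hA.2, hX.2] using gnpProb_degree_le_le h0 h1 ht D hX.1 hA.1
  · rw [nsmul_eq_mul, card_s]
    push_cast
    gcongr
    exact_mod_cast Nat.choose_le_pow n f

end LowDegree

section Scattered

variable {V : Type*} {G : SimpleGraph V} {D : ℝ}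

open Classical in
theorem toFinset_edges_subset_sym2_toFinset_support {x y : V} (w : G.Walk x y) :
    w.edges.toFinset ⊆ w.support.toFinset.sym2 := fun _ he =>
  mem_sym2_iff.2 fun _ hv => List.mem_toFinset.2
    (w.mem_support_of_mem_edges (List.mem_toFinset.1 he) hv)

variable [Fintype V]

open Classical in
theorem HasLowDegreeConfiguration.of_isPath {x y : V} {w : G.Walk x y} (hw : w.IsPath)
    (hxy : x ≠ y) (hx : (G.degree x : ℝ) ≤ D) (hy : (G.degree y : ℝ) ≤ D) :
    HasLowDegreeConfiguration G D (w.length + 1) w.length 2 := by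
  refine ⟨w.support.toFinset, ?_,
    ⟨w.edges.toFinset, toFinset_edges_subset_sym2_toFinset_support w, ?_, fun e he => ?_⟩,
    {x, y}, ?_, card_pair hxy, ?_⟩
  · rw [List.toFinset_card_of_nodup hw.support_nodup, w.length_support]
  · rw [List.toFinset_card_of_nodup hw.isTrail.edges_nodup, w.length_edges]
  · simpa using w.edges_subset_edgeSet (List.mem_toFinset.1 he)
  · simp [insert_subset_iff]
  · simp [hx, hy]

open Classical in
theorem HasLowDegreeConfiguration.of_isCycle {x : V} {c : G.Walk x x} (hc : c.IsCycle)
    (hx : (G.degree x : ℝ) ≤ D) : HasLowDegreeConfiguration G D c.length c.length 1 := by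
  have support_tail : c.support.tail.toFinset = c.support.toFinset := by
    ext v
    rw [List.mem_toFinset, List.mem_toFinset, c.mem_support_iff]
    have := c.end_mem_tail_support hc.not_nil
    aesop
  refine ⟨c.support.toFinset, ?_,
    ⟨c.edges.toFinset, toFinset_edges_subset_sym2_toFinset_support c, ?_, fun e he => ?_⟩,
    {x}, ?_, card_singleton x, ?_⟩
  · rw [← support_tail, List.toFinset_card_of_nodup hc.support_nodup, List.length_tail,
      c.length_support, Nat.add_sub_cancel]
  · rw [List.toFinset_card_of_nodup hc.isTrail.edges_nodup, c.length_edges]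
  · simpa using c.edges_subset_edgeSet (List.mem_toFinset.1 he)
  · simp
  · simpa using hx

open Classical in
theorem isScattered_of_not_hasLowDegreeConfiguration
    (hpath : ∀ l ∈ Icc 1 4, ¬ HasLowDegreeConfiguration G D (l + 1) l 2)
    (hcycle : ∀ l ∈ Icc 3 4, ¬ HasLowDegreeConfiguration G D l l 1) :
    IsScattered G {v | (G.degree v : ℝ) < D} where
  five_le_length x hx y hy hxy w := by
    by_contra! hw
    refine hpath w.bypass.length (mem_Icc.2 ⟨?_, ?_⟩)
      (.of_isPath w.bypass_isPath hxy (le_of_lt hx) (le_of_lt hy))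
    · exact Nat.one_le_iff_ne_zero.2 fun h => hxy (w.bypass.eq_of_length_eq_zero h)
    · exact w.length_bypass_le_length.trans (Nat.le_of_lt_succ hw)
  five_le_length_of_isCycle x hx c hc := by
    by_contra! hlen
    exact hcycle c.length (mem_Icc.2 ⟨hc.three_le_length, Nat.le_of_lt_succ hlen⟩)
      (.of_isCycle hc (le_of_lt hx))

end Scattered

section LargeDeviations

variable {n : ℕ} {p : ℝ}

theorem sum_pow_card_powerset {α : Type*} (s : Finset α) (x : ℝ) :
    ∑ t ∈ s.powerset, x ^ #t = (1 + x) ^ #s := by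
  simpa [add_comm] using sum_pow_mul_eq_add_pow x 1 s

theorem one_add_pow_le_exp {x : ℝ} (hx : 0 ≤ x) (k : ℕ) : (1 + x) ^ k ≤ Real.exp (k * x) := by
  rw [Real.exp_nat_mul]
  gcongr
  linarith [Real.add_one_le_exp x]

open Classical in
theorem gnpProb_not_isLocallySparse_le (h0 : 0 ≤ p) (h1 : p ≤ 1) {t : ℝ} (ht : 0 ≤ t) (m c : ℝ) :
    gnpProb n p (fun G => ¬ IsLocallySparse G m c)
      ≤ Real.exp (n * Real.exp (-(t * c) + p * Real.exp t * m)) - 1 := by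
  set x := Real.exp (-(t * c) + p * Real.exp t * m) with hx
  have prob_le {U : Finset (Fin n)} (hU : (#U : ℝ) ≤ m) :
      gnpProb n p (fun G => c * #U ≤ #(G.edgeFinset ∩ U.sym2)) ≤ x ^ #U := by
    have card_sym2_le : (#U.sym2 : ℝ) ≤ m * #U := by
      have : #U.sym2 ≤ #U * #U := by
        rw [card_sym2, Nat.choose_two_right, Nat.add_sub_cancel]
        exact Nat.div_le_of_le_mul (by nlinarith [Nat.le_mul_self #U])
      calc (#U.sym2 : ℝ) ≤ #U * #U := mod_cast this
        _ ≤ m * #U := by gcongr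
    refine (gnpProb_le_card_inter h0 h1 ht (c * #U) U.sym2).trans ?_
    rw [hx, ← Real.exp_nat_mul, Real.exp_le_exp]
    nlinarith [mul_le_mul_of_nonneg_left card_sym2_le (mul_nonneg h0 (Real.exp_nonneg t))]
  calc gnpProb n p (fun G => ¬ IsLocallySparse G m c)
      ≤ ∑ U : Finset (Fin n) with U.Nonempty ∧ (#U : ℝ) ≤ m,
          gnpProb n p (fun G => c * #U ≤ #(G.edgeFinset ∩ U.sym2)) :=
        gnpProb_le_sum h0 h1 _ fun G hG => by
          simp only [IsLocallySparse, not_forall, not_lt] at hG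
          obtain ⟨U, hne, hU, hspan⟩ := hG
          exact ⟨U, by simp [hne, hU], hspan.trans_eq (by congr!)⟩
    _ ≤ ∑ U : Finset (Fin n) with U.Nonempty ∧ (#U : ℝ) ≤ m, x ^ #U :=
        sum_le_sum fun U hU => prob_le (mem_filter.1 hU).2.2
    _ ≤ ∑ U ∈ univ.erase (∅ : Finset (Fin n)), x ^ #U :=
        sum_le_sum_of_subset_of_nonneg (fun U hU => by
          simpa using (mem_filter.1 hU).2.1.ne_empty) fun U _ _ => by positivity
    _ = (1 + x) ^ n - 1 := by
        have := sum_pow_card_powerset (univ : Finset (Fin n)) x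
        rw [powerset_univ, ← sum_erase_add _ _ (mem_univ ∅), card_empty, pow_zero, card_univ,
          Fintype.card_fin] at this
        rw [← this, add_sub_cancel_right]
    _ ≤ Real.exp (n * x) - 1 := sub_le_sub_right (one_add_pow_le_exp (Real.exp_nonneg _) n) 1

open Classical in
/-- Any two disjoint sets of at least `s` vertices are joined by at least `r` edges. -/
def HasManyInteredges {V : Type*} (K : SimpleGraph V) (s r : ℝ) : Prop :=
  ∀ A B : Finset V, Disjoint A B → s ≤ #A → s ≤ #B → r ≤ #(K.interedges A B)

open Classical in
theorem HasManyInteredges.joinsDisjointSets {V : Type*} {K : SimpleGraph V} {s r : ℝ}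
    (h : HasManyInteredges K s r) (hr : 0 < r) : JoinsDisjointSets K s := fun A B hAB hA hB => by
  have : 0 < #(K.interedges A B) := mod_cast hr.trans_le (h A B hAB hA hB)
  obtain ⟨⟨a, b⟩, hab⟩ := card_pos.1 this
  rw [SimpleGraph.mem_interedges_iff] at hab
  exact ⟨a, hab.1, b, hab.2.1, hab.2.2⟩

open Classical in
theorem gnpProb_not_hasManyInteredges_inf_le (h0 : 0 ≤ p) (h1 : p ≤ 1) {K : SimpleGraph (Fin n)}
    {s r : ℝ} (hK : HasManyInteredges K s r) :
    gnpProb n p (fun G => ¬ HasManyInteredges (G ⊓ K) s (p * r / 4))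
      ≤ 4 ^ n * Real.exp (-(p * r / 4)) := by
  have prob_le {A B : Finset (Fin n)} (hAB : Disjoint A B) (hA : s ≤ #A) (hB : s ≤ #B) :
      gnpProb n p (fun G => ∅ ⊆ G.edgeFinset ∧
          (#(G.edgeFinset ∩ crossEdges K A B) : ℝ) ≤ p * r / 4)
        ≤ Real.exp (-(p * r / 4)) := by
    refine (gnpProb_card_inter_le h0 h1 zero_le_one _ (crossEdges_subset_edgeFinset.trans
      (SimpleGraph.edgeFinset_mono le_top)) (disjoint_empty_left _)).trans ?_
    have exp_neg_one_le : Real.exp (-1) ≤ 1 / 2 := by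
      linarith [Real.exp_neg_one_lt_d9]
    have card_ge : r ≤ #(crossEdges K A B) := by
      rw [card_crossEdges hAB]
      convert hK A B hAB hA hB
    rw [card_empty, pow_zero, one_mul, Real.exp_le_exp]
    nlinarith [mul_le_mul_of_nonneg_left card_ge h0,
      mul_nonneg h0 (Nat.cast_nonneg (α := ℝ) #(crossEdges K A B))]
  let pairs : Finset (Finset (Fin n) × Finset (Fin n)) :=
    {q | Disjoint q.1 q.2 ∧ s ≤ #q.1 ∧ s ≤ #q.2}
  refine (gnpProb_le_sum h0 h1 pairs (Q := fun q G => ∅ ⊆ G.edgeFinset ∧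
    (#(G.edgeFinset ∩ crossEdges K q.1 q.2) : ℝ) ≤ p * r / 4) fun G hG => ?_).trans
    ((sum_le_card_nsmul pairs _ (Real.exp (-(p * r / 4))) fun q hq => ?_).trans ?_)
  · simp only [HasManyInteredges, not_forall, not_le] at hG
    obtain ⟨A, B, hAB, hA, hB, hlt⟩ := hG
    refine ⟨(A, B), by simp [pairs, hAB, hA, hB], empty_subset _, ?_⟩
    rw [edgeFinset_inter_crossEdges, card_crossEdges hAB]
    exact hlt.le
  · obtain ⟨hAB, hA, hB⟩ := (mem_filter.1 hq).2
    exact prob_le hAB hA hB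
  · have card_pairs : #pairs ≤ 4 ^ n := by
      refine (card_le_univ _).trans_eq ?_
      simp [← mul_pow]
    rw [nsmul_eq_mul]
    gcongr
    exact_mod_cast card_pairs

theorem boosters_subset_edgeFinset_top (Γ : SimpleGraph (Fin n)) :
    boosters Γ ⊆ (⊤ : SimpleGraph (Fin n)).edgeFinset := fun e he => by
  obtain ⟨y, t, l, rfl, hyt, -⟩ := mem_boosters.1 he
  simpa using hyt

open Classical in
theorem sum_pow_card_edgeFinset_le {x : ℝ} (hx : 0 ≤ x) (n : ℕ) :
    ∑ Γ : SimpleGraph (Fin n), x ^ #Γ.edgeFinset ≤ Real.exp (x * n ^ 2) := by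
  rw [sum_edgeFinset_eq_sum_powerset fun T => x ^ #T, sum_pow_card_powerset,
    SimpleGraph.card_edgeFinset_top_eq_card_choose_two, Fintype.card_fin]
  refine (one_add_pow_le_exp hx _).trans (Real.exp_le_exp.2 ?_)
  rw [mul_comm]
  gcongr
  exact_mod_cast Nat.choose_le_pow n 2

open Classical in
theorem gnpProb_disjoint_boosters_le (h0 : 0 ≤ p) (h1 : p ≤ 1) {x : ℝ} (hx0 : 0 < x)
    (hx1 : x ≤ 1) {k b : ℝ} {Γ : SimpleGraph (Fin n)} (hk : (#Γ.edgeFinset : ℝ) ≤ k)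
    (hb : b ≤ #(boosters Γ)) (hΓ : Disjoint Γ.edgeFinset (boosters Γ)) :
    gnpProb n p (fun G => Γ.edgeFinset ⊆ G.edgeFinset ∧ Disjoint G.edgeFinset (boosters Γ))
      ≤ (p * x) ^ #Γ.edgeFinset * Real.exp (k * Real.log (1 / x) - p * b) := by
  refine (gnpProb_disjoint_le h0 h1 (boosters_subset_edgeFinset_top Γ) hΓ).trans ?_
  have one_le : 1 ≤ x ^ #Γ.edgeFinset * Real.exp (k * Real.log (1 / x)) := by
    rw [one_div, Real.log_inv, ← Real.exp_log (pow_pos hx0 _), Real.log_pow, ← Real.exp_add,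
      Real.one_le_exp_iff]
    nlinarith [Real.log_nonpos hx0.le hx1]
  calc p ^ #Γ.edgeFinset * Real.exp (-(p * #(boosters Γ)))
      ≤ p ^ #Γ.edgeFinset * Real.exp (-(p * b)) := by gcongr
    _ ≤ p ^ #Γ.edgeFinset * Real.exp (-(p * b))
          * (x ^ #Γ.edgeFinset * Real.exp (k * Real.log (1 / x))) :=
        le_mul_of_one_le_right (by positivity) one_le
    _ = (p * x) ^ #Γ.edgeFinset * Real.exp (k * Real.log (1 / x) - p * b) := by
        rw [sub_eq_add_neg, Real.exp_add, mul_pow]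
        ring

open Classical in
theorem gnpProb_not_containsBoosters_le (h0 : 0 ≤ p) (h1 : p ≤ 1) {x : ℝ} (hx0 : 0 < x)
    (hx1 : x ≤ 1) (k b : ℝ) :
    gnpProb n p (fun G => ¬ ContainsBoosters G k b)
      ≤ Real.exp (k * Real.log (1 / x) + p * x * n ^ 2 - p * b) := by
  let family : Finset (SimpleGraph (Fin n)) :=
    {Γ | (#Γ.edgeFinset : ℝ) ≤ k ∧ b ≤ #(boosters Γ) ∧ Disjoint Γ.edgeFinset (boosters Γ)}
  calc gnpProb n p (fun G => ¬ ContainsBoosters G k b)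
      ≤ ∑ Γ ∈ family,
          gnpProb n p (fun G => Γ.edgeFinset ⊆ G.edgeFinset ∧ Disjoint G.edgeFinset (boosters Γ)) :=
        gnpProb_le_sum h0 h1 _ fun G hG => by
          simp only [ContainsBoosters, not_forall, not_exists, not_and] at hG
          obtain ⟨Γ, hΓG, hk, hb, hno⟩ := hG
          have hdisj : Disjoint G.edgeFinset (boosters Γ) := disjoint_right.2 fun e he heG =>
            hno e he (SimpleGraph.mem_edgeFinset.1 heG)
          have hsub := SimpleGraph.edgeFinset_mono hΓG
          exact ⟨Γ, by simp [family, hk, hb, hdisj.mono_left hsub], hsub, hdisj⟩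
    _ ≤ ∑ Γ ∈ family, (p * x) ^ #Γ.edgeFinset * Real.exp (k * Real.log (1 / x) - p * b) :=
        sum_le_sum fun Γ hΓ => by
          obtain ⟨hk, hb, hdisj⟩ := (mem_filter.1 hΓ).2
          exact gnpProb_disjoint_boosters_le h0 h1 hx0 hx1 hk hb hdisj
    _ ≤ ∑ Γ : SimpleGraph (Fin n),
          (p * x) ^ #Γ.edgeFinset * Real.exp (k * Real.log (1 / x) - p * b) :=
        sum_le_sum_of_subset_of_nonneg (subset_univ _) fun Γ _ _ => by positivity
    _ ≤ Real.exp (p * x * n ^ 2) * Real.exp (k * Real.log (1 / x) - p * b) := by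
        rw [← sum_mul]
        gcongr
        exact sum_pow_card_edgeFinset_le (by positivity) n
    _ = Real.exp (k * Real.log (1 / x) + p * x * n ^ 2 - p * b) := by
        rw [← Real.exp_add]
        ring_nf

end LargeDeviations

/-! ### Random graphs of logarithmic average degree -/

theorem tendsto_log_natCast_atTop : Tendsto (fun n : ℕ => Real.log n) atTop atTop :=
  Real.tendsto_log_atTop.comp tendsto_natCast_atTop_atTop

theorem eventually_log_le {p : ℕ → ℝ}
    (hp : Tendsto (fun n : ℕ => n * p n - Real.log n - Real.log (Real.log n)) atTop atTop) :
    ∀ᶠ n : ℕ in atTop, Real.log n ≤ n * p n := by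
  filter_upwards [hp.eventually_ge_atTop 0, tendsto_log_natCast_atTop.eventually_ge_atTop 1]
    with n hn hlog
  linarith [Real.log_nonneg hlog]

open Classical in
theorem gnpProb_hasLowDegreeConfiguration_le_of_log_le {n : ℕ} {p C δ : ℝ} (h0 : 0 ≤ p)
    (h1 : p ≤ 1) (hn : n ≠ 0) (hlog : Real.log n ≤ n * p) (hC : n * p ≤ C * Real.log n)
    (hδ : 10 * Real.log 10 * δ ≤ 1) (f a b : ℕ) :
    gnpProb n p (fun G => HasLowDegreeConfiguration G (δ * Real.log n) f a b)
      ≤ ((f + 1).choose 2).choose a * f.choose b * C ^ a * Real.exp (b * f)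
        * (Real.log n ^ a * Real.exp (-(a + 0.8 * b - f) * Real.log n)) := by
  have hn0 : (0 : ℝ) < n := Nat.cast_pos.2 (Nat.pos_of_ne_zero hn)
  have log_nonneg : 0 ≤ Real.log n := Real.log_natCast_nonneg n
  have exponent_le : Real.log 10 * (b * (δ * Real.log n))
      - p * (1 - Real.exp (-Real.log 10)) * (b * (n - f)) ≤ b * f - 0.8 * b * Real.log n := by
    have : Real.log 10 * (δ * Real.log n) - p * (1 - 10⁻¹) * (n - f) ≤ f - 0.8 * Real.log n := by
      nlinarith [mul_le_mul_of_nonneg_right hδ log_nonneg, f.cast_nonneg (α := ℝ)]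
    rw [Real.exp_neg, Real.exp_log (by norm_num)]
    nlinarith [b.cast_nonneg (α := ℝ)]
  have pow_mul_pow_le :
      (n : ℝ) ^ f * p ^ a ≤ (C * Real.log n) ^ a * Real.exp ((f - a) * Real.log n) := by
    calc (n : ℝ) ^ f * p ^ a = (n * p) ^ a * ((n : ℝ) ^ f / (n : ℝ) ^ a) := by
          rw [mul_pow]
          field_simp
      _ = (n * p) ^ a * Real.exp ((f - a) * Real.log n) := by
          rw [sub_mul, Real.exp_sub, Real.exp_nat_mul, Real.exp_nat_mul, Real.exp_log hn0]
      _ ≤ (C * Real.log n) ^ a * Real.exp ((f - a) * Real.log n) := by gcongr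
  have hClog : 0 ≤ C * Real.log n := (mul_nonneg hn0.le h0).trans hC
  set N : ℝ := ((f + 1).choose 2).choose a * f.choose b
  refine (gnpProb_hasLowDegreeConfiguration_le h0 h1 (Real.log_nonneg (by norm_num : (1 : ℝ) ≤ 10))
    (δ * Real.log n) f a b).trans ?_
  calc _ = N * (n ^ f * p ^ a) * Real.exp (Real.log 10 * (b * (δ * Real.log n))
          - p * (1 - Real.exp (-Real.log 10)) * (b * (n - f))) := by ring
    _ ≤ N * ((C * Real.log n) ^ a * Real.exp ((f - a) * Real.log n))
          * Real.exp (b * f - 0.8 * b * Real.log n) := by gcongr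
    _ = N * C ^ a * Real.log n ^ a * (Real.exp ((f - a) * Real.log n)
          * Real.exp (b * f - 0.8 * b * Real.log n)) := by ring
    _ = N * C ^ a * Real.log n ^ a
          * (Real.exp (b * f) * Real.exp (-(a + 0.8 * b - f) * Real.log n)) := by
        rw [← Real.exp_add, ← Real.exp_add]
        ring_nf
    _ = N * C ^ a * Real.exp (b * f)
          * (Real.log n ^ a * Real.exp (-(a + 0.8 * b - f) * Real.log n)) := by ring

namespace WithHighProb

variable {p : ℕ → ℝ} {C : ℝ}

open Classical in
theorem two_le_degree (hp01 : ∀ n, 0 ≤ p n ∧ p n ≤ 1)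
    (hp : Tendsto (fun n : ℕ => n * p n - Real.log n - Real.log (Real.log n)) atTop atTop)
    (hC : ∀ᶠ n : ℕ in atTop, n * p n ≤ C * Real.log n) :
    WithHighProb p fun _ G => ∀ v, 2 ≤ G.degree v := by
  refine of_not_le hp01
    (Real.tendsto_exp_neg_atTop_nhds_zero.comp (tendsto_atTop_add_const_right _ (-(1 + C)) hp)) ?_
  filter_upwards [hC, tendsto_log_natCast_atTop.eventually_ge_atTop 1, eventually_ge_atTop 1]
    with n hn hlog hn1
  have hn0 : (0 : ℝ) < n := mod_cast hn1
  have hlog0 : 0 < Real.log n := one_pos.trans_le hlog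
  obtain ⟨h0, h1⟩ := hp01 n
  have ratio_le : n * p n * (Real.log n)⁻¹ ≤ C := by
    rwa [← div_eq_mul_inv, div_le_iff₀ hlog0]
  refine (gnpProb_not_two_le_degree_le h0 h1 (Real.log_nonneg hlog)).trans ?_
  rw [Real.exp_neg, Real.exp_log hlog0]
  nth_rewrite 1 [← Real.exp_log hn0]
  rw [← Real.exp_add, Function.comp_apply, Real.exp_le_exp]
  nlinarith [mul_nonneg h0 (inv_nonneg.2 hlog0.le)]

theorem not_hasLowDegreeConfiguration (hp01 : ∀ n, 0 ≤ p n ∧ p n ≤ 1)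
    (hlog : ∀ᶠ n : ℕ in atTop, Real.log n ≤ n * p n)
    (hC : ∀ᶠ n : ℕ in atTop, n * p n ≤ C * Real.log n) {δ : ℝ} (hδ : 10 * Real.log 10 * δ ≤ 1)
    {f a b : ℕ} (hfab : f < a + 0.8 * (b : ℝ)) :
    WithHighProb p fun n G => ¬ HasLowDegreeConfiguration G (δ * Real.log n) f a b := by
  set c : ℝ := a + 0.8 * b - f with hc
  set K : ℝ := ((f + 1).choose 2).choose a * f.choose b * C ^ a * Real.exp (b * f)
  have tendsto_bound :
      Tendsto (fun n : ℕ => K * (Real.log n ^ a * Real.exp (-c * Real.log n))) atTop (𝓝 0) := by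
    simpa using ((tendsto_rpow_mul_exp_neg_mul_atTop_nhds_zero a c (by linarith)).comp
      tendsto_log_natCast_atTop).const_mul K
  refine of_not_le hp01 tendsto_bound ?_
  filter_upwards [hlog, hC, eventually_ne_atTop 0] with n hlog_le hC_le hn
  simpa only [not_not] using gnpProb_hasLowDegreeConfiguration_le_of_log_le (hp01 n).1 (hp01 n).2
    hn hlog_le hC_le hδ f a b

open Classical in
theorem isScattered (hp01 : ∀ n, 0 ≤ p n ∧ p n ≤ 1)
    (hlog : ∀ᶠ n : ℕ in atTop, Real.log n ≤ n * p n)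
    (hC : ∀ᶠ n : ℕ in atTop, n * p n ≤ C * Real.log n) {δ : ℝ} (hδ : 10 * Real.log 10 * δ ≤ 1) :
    WithHighProb p fun n G => IsScattered G {v | (G.degree v : ℝ) < δ * Real.log n} :=
  ((finset_forall hp01 (Icc 1 4) fun l _ =>
    not_hasLowDegreeConfiguration hp01 hlog hC hδ (f := l + 1) (a := l) (b := 2)
      (by push_cast; linarith)).and hp01 <| finset_forall hp01 (Icc 3 4) fun l _ =>
    not_hasLowDegreeConfiguration hp01 hlog hC hδ (f := l) (a := l) (b := 1)
      (by push_cast; linarith)).mono hp01 <|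
    .of_forall fun n G h => isScattered_of_not_hasLowDegreeConfiguration h.1 h.2

theorem exists_isLocallySparse (hp01 : ∀ n, 0 ≤ p n ∧ p n ≤ 1) (hC0 : 0 < C)
    (hC : ∀ᶠ n : ℕ in atTop, n * p n ≤ C * Real.log n) {c : ℝ} (hc : 0 < c) :
    ∃ γ > 0, WithHighProb p fun n G => IsLocallySparse G (γ * n) (c * Real.log n) := by
  refine ⟨(C * Real.exp (3 / c))⁻¹, by positivity, of_not_le hp01
    (f := fun n : ℕ => Real.exp (n : ℝ)⁻¹ - 1) ?_ ?_⟩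
  · simpa using ((Real.continuous_exp.tendsto _).comp
      (tendsto_inv_atTop_nhds_zero_nat (𝕜 := ℝ))).sub_const 1
  filter_upwards [hC, eventually_ge_atTop 1] with n hn hn1
  have hn0 : (0 : ℝ) < n := mod_cast hn1
  obtain ⟨h0, h1⟩ := hp01 n
  refine (gnpProb_not_isLocallySparse_le h0 h1 (t := 3 / c) (by positivity) _ _).trans ?_
  have exponent_le : -(3 / c * (c * Real.log n))
      + p n * Real.exp (3 / c) * ((C * Real.exp (3 / c))⁻¹ * n) ≤ -(Real.log n + Real.log n) := by
    have : p n * Real.exp (3 / c) * ((C * Real.exp (3 / c))⁻¹ * n) ≤ Real.log n := by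
      calc p n * Real.exp (3 / c) * ((C * Real.exp (3 / c))⁻¹ * n) = n * p n / C := by
            field_simp
        _ ≤ Real.log n := by rwa [div_le_iff₀' hC0]
    have : 3 / c * (c * Real.log n) = 3 * Real.log n := by field_simp
    linarith
  gcongr
  calc n * Real.exp (-(3 / c * (c * Real.log n))
        + p n * Real.exp (3 / c) * ((C * Real.exp (3 / c))⁻¹ * n))
      ≤ n * Real.exp (-(Real.log n + Real.log n)) := by gcongr
    _ = (n : ℝ)⁻¹ := by
        rw [Real.exp_neg, Real.exp_add, Real.exp_log hn0]
        field_simp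

open Classical in
theorem card_edgeFinset_inter_lt (hp01 : ∀ n, 0 ≤ p n ∧ p n ≤ 1)
    {B : ∀ n, Finset (Sym2 (Fin n))} {b : ℕ → ℝ} (hb : Tendsto b atTop atTop)
    (hB : ∀ᶠ n in atTop, 6 * (p n * #(B n)) ≤ b n) :
    WithHighProb p fun n G => (#(G.edgeFinset ∩ B n) : ℝ) < b n := by
  refine of_not_le hp01 (Real.tendsto_exp_neg_atTop_nhds_zero.comp
    (hb.atTop_mul_const one_half_pos)) ?_
  filter_upwards [hB] with n hn
  simp only [not_lt]
  refine (gnpProb_le_card_inter (hp01 n).1 (hp01 n).2 zero_le_one _ _).trans ?_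
  rw [Function.comp_apply, Real.exp_le_exp]
  have : 0 ≤ p n * #(B n) := mul_nonneg (hp01 n).1 (Nat.cast_nonneg _)
  nlinarith [Real.exp_one_lt_three]

theorem hasManyInteredges_inf (hp01 : ∀ n, 0 ≤ p n ∧ p n ≤ 1)
    (hp : Tendsto (fun n : ℕ => n * p n) atTop atTop) {K : ∀ n, SimpleGraph (Fin n)}
    {s : ℕ → ℝ} {c : ℝ} (hc : 0 < c)
    (hK : ∀ᶠ n in atTop, HasManyInteredges (K n) (s n) (c * n ^ 2)) :
    WithHighProb p fun n G => HasManyInteredges (G ⊓ K n) (s n) (p n * (c * n ^ 2) / 4) := by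
  refine of_not_le hp01 (Real.tendsto_exp_neg_atTop_nhds_zero.comp
    (tendsto_natCast_atTop_atTop (R := ℝ))) ?_
  filter_upwards [hK, hp.eventually_ge_atTop ((Real.log 4 + 1) * 4 / c)] with n hn hlarge
  refine (gnpProb_not_hasManyInteredges_inf_le (hp01 n).1 (hp01 n).2 hn).trans ?_
  rw [div_le_iff₀ hc] at hlarge
  rw [Function.comp_apply, ← Real.exp_log (by positivity : (0 : ℝ) < 4 ^ n), Real.log_pow,
    ← Real.exp_add, Real.exp_le_exp]
  nlinarith [n.cast_nonneg (α := ℝ)]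

end WithHighProb

open Classical in
theorem hasManyInteredges_top {V : Type*} {s : ℝ} (hs : 0 ≤ s) :
    HasManyInteredges (⊤ : SimpleGraph V) s (s ^ 2) := fun A B hAB hA hB => by
  rw [← card_crossEdges hAB, card_crossEdges_top hAB, Nat.cast_mul, sq]
  exact mul_le_mul hA hB hs (Nat.cast_nonneg _)

theorem card_edgeFinset_le_sq {n : ℕ} (K : SimpleGraph (Fin n)) [Fintype K.edgeSet] :
    (#K.edgeFinset : ℝ) ≤ n ^ 2 := by
  have : #K.edgeFinset ≤ n.choose 2 := by simpa using K.card_edgeFinset_le_card_choose_two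
  exact_mod_cast this.trans (Nat.choose_le_pow n 2)

open Classical in
theorem exists_sparse_hasManyInteredges {γ η : ℝ} (hγ : 0 < γ) (hη : 0 < η) :
    ∃ c > 0, ∃ H : ∀ n, SimpleGraph (Fin n), ∀ᶠ n in atTop,
      (#(H n).edgeFinset : ℝ) ≤ η * n ^ 2 ∧ HasManyInteredges (H n) (γ * n) (c * n ^ 2) := by
  set q : ℝ := min η 1 / 6 with hq
  have hq0 : 0 < q := by positivity
  have hqη : 6 * q ≤ η := by linarith [min_le_left η 1]
  have hq01 (_ : ℕ) : 0 ≤ q ∧ q ≤ 1 := ⟨hq0.le, by linarith [min_le_right η 1]⟩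
  have few_edges := WithHighProb.card_edgeFinset_inter_lt hq01
    (B := fun _ => (⊤ : SimpleGraph _).edgeFinset)
    (b := fun n => η * n ^ 2)
    (((tendsto_pow_atTop two_ne_zero).comp tendsto_natCast_atTop_atTop).const_mul_atTop hη)
    (.of_forall fun n => by
      calc _ ≤ 6 * (q * (n : ℝ) ^ 2) := by
            gcongr
            exact card_edgeFinset_le_sq _
        _ = 6 * q * n ^ 2 := by ring
        _ ≤ η * n ^ 2 := by gcongr)
  have many_interedges := WithHighProb.hasManyInteredges_inf hq01 (K := fun _ => ⊤)
    (s := fun n => γ * n) (c := γ ^ 2)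
    (tendsto_natCast_atTop_atTop.atTop_mul_const hq0) (by positivity)
    (.of_forall fun n => by
      simpa only [mul_pow] using hasManyInteredges_top (s := γ * n) (by positivity))
  obtain ⟨H, hH⟩ := skolem.1 (few_edges.and hq01 many_interedges).eventually_exists
  refine ⟨q * γ ^ 2 / 4, by positivity, H, hH.mono fun n hn => ⟨?_, ?_⟩⟩
  · simpa only [inter_eq_left.2 (SimpleGraph.edgeFinset_mono (le_top (a := H n)))] using hn.1.le
  · convert hn.2 using 1
    · rw [inf_top_eq]
    · ring

namespace WithHighProb

variable {p : ℕ → ℝ} {C : ℝ}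

open Classical in
theorem exists_sparse_joinsDisjointSets (hp01 : ∀ n, 0 ≤ p n ∧ p n ≤ 1) (hC0 : 0 < C)
    (hlog : ∀ᶠ n : ℕ in atTop, Real.log n ≤ n * p n)
    (hC : ∀ᶠ n : ℕ in atTop, n * p n ≤ C * Real.log n) {γ κ : ℝ} (hγ : 0 < γ) (hκ : 0 < κ) :
    WithHighProb p fun n G => ∃ R ≤ G, JoinsDisjointSets R (γ * n) ∧
      (#R.edgeFinset : ℝ) ≤ κ * (n * Real.log n) := by
  obtain ⟨c, hc, H, hH⟩ := exists_sparse_hasManyInteredges hγ (η := κ / (6 * C)) (by positivity)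
  have hp := tendsto_atTop_mono' _ hlog tendsto_log_natCast_atTop
  have tendsto_n_log : Tendsto (fun n : ℕ => κ * (n * Real.log n)) atTop atTop :=
    (tendsto_natCast_atTop_atTop.atTop_mul_atTop₀ tendsto_log_natCast_atTop).const_mul_atTop hκ
  have few_edges := card_edgeFinset_inter_lt hp01
      (B := fun n => (H n).edgeFinset) tendsto_n_log <| by
    filter_upwards [hH, hC] with n hn hCn
    calc 6 * (p n * #(H n).edgeFinset) ≤ 6 * (p n * (κ / (6 * C) * n ^ 2)) := by
          gcongr
          exacts [(hp01 n).1, hn.1]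
      _ = κ / C * n * (n * p n) := by field_simp
      _ ≤ κ / C * n * (C * Real.log n) := by gcongr
      _ = κ * (n * Real.log n) := by field_simp
  have joins := hasManyInteredges_inf hp01 hp hc (hH.mono fun n hn => hn.2)
  refine (few_edges.and hp01 joins).mono hp01 ?_
  filter_upwards [hp.eventually_gt_atTop 0] with n hnp G hG
  refine ⟨G ⊓ H n, inf_le_left, hG.2.joinsDisjointSets ?_, by
    simpa only [SimpleGraph.edgeFinset_inf] using hG.1.le⟩
  have hn0 : (0 : ℝ) < n := pos_of_mul_pos_left hnp (hp01 n).1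
  have : p n * (c * n ^ 2) / 4 = c * n * (n * p n) / 4 := by ring
  rw [this]
  positivity

open Classical in
theorem isPseudorandom (hp01 : ∀ n, 0 ≤ p n ∧ p n ≤ 1)
    (hp : Tendsto (fun n : ℕ => n * p n - Real.log n - Real.log (Real.log n)) atTop atTop)
    (hC0 : 0 < C) (hC : ∀ᶠ n : ℕ in atTop, n * p n ≤ C * Real.log n) {δ κ : ℝ} (hδ0 : 0 < δ)
    (hδ : 10 * Real.log 10 * δ ≤ 1) (hκ : 0 < κ) :
    WithHighProb p fun n G => ∃ R, (#R.edgeFinset : ℝ) ≤ κ * (n * Real.log n) ∧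
      ∃ m, IsPseudorandom G R (δ * Real.log n) m := by
  have hlog := eventually_log_le hp
  obtain ⟨γ, hγ, sparse⟩ := exists_isLocallySparse hp01 hC0 hC (c := δ / 10) (by positivity)
  have joins := exists_sparse_joinsDisjointSets hp01 hC0 hlog hC (γ := γ / 5) (by positivity) hκ
  refine ((two_le_degree hp01 hp hC).and hp01 <| (isScattered hp01 hlog hC hδ).and hp01 <|
    sparse.and hp01 joins).mono hp01 (.of_forall fun n G => ?_)
  rintro ⟨hdeg, hscat, hsparse, R, hRG, hR, hcard⟩
  refine ⟨R, hcard, γ / 5 * n, ?_⟩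
  exact {
    le := hRG
    two_le_degree := hdeg
    isScattered := hscat
    isLocallySparse := by convert hsparse using 1 <;> ring
    joinsDisjointSets := hR }

theorem exists_containsBoosters (hp01 : ∀ n, 0 ≤ p n ∧ p n ≤ 1)
    (hlog : ∀ᶠ n : ℕ in atTop, Real.log n ≤ n * p n) {β : ℝ} (hβ : 0 < β) :
    ∃ κ > 0, WithHighProb p fun n G => ContainsBoosters G (κ * (n * Real.log n)) (β * n ^ 2) := by
  set x : ℝ := min β 1 / 4 with hx
  have hx0 : 0 < x := by positivity
  have hxβ : 4 * x ≤ β := by linarith [min_le_left β 1]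
  have hx1 : x < 1 := by linarith [min_le_right β 1]
  have hlogx : 0 < Real.log (1 / x) := Real.log_pos (one_lt_one_div hx0 hx1)
  have tendsto_n_log : Tendsto (fun n : ℕ => 2 * x * (n * Real.log n)) atTop atTop :=
    (tendsto_natCast_atTop_atTop.atTop_mul_atTop₀ tendsto_log_natCast_atTop).const_mul_atTop
      (by positivity)
  refine ⟨x / Real.log (1 / x), by positivity,
    of_not_le hp01 (Real.tendsto_exp_neg_atTop_nhds_zero.comp tendsto_n_log) ?_⟩
  filter_upwards [hlog] with n hn
  refine (gnpProb_not_containsBoosters_le (hp01 n).1 (hp01 n).2 hx0 hx1.le _ _).trans ?_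
  have : x / Real.log (1 / x) * (n * Real.log n) * Real.log (1 / x) = x * (n * Real.log n) := by
    field_simp
  have n_log_le : n * Real.log n ≤ p n * n ^ 2 := by nlinarith [n.cast_nonneg (α := ℝ)]
  have : 0 ≤ p n * n ^ 2 := mul_nonneg (hp01 n).1 (by positivity)
  rw [Function.comp_apply, Real.exp_le_exp]
  nlinarith

end WithHighProb

open Classical in
theorem IsPseudorandom.hasManyHamiltonPaths_of_le_mul_log {n : ℕ} {G R : SimpleGraph (Fin n)}
    {W : Finset (Fin n)} {α κ δ ε m : ℝ} (hδ0 : 0 < δ) (hδκ : 4 * δ ≤ κ) (hδε : δ ≤ ε)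
    (h : IsPseudorandom G R (δ * Real.log n) m)
    (hboost : ContainsBoosters G (κ * (n * Real.log n)) (α ^ 2 / 32 * n ^ 2))
    (hR : (#R.edgeFinset : ℝ) ≤ κ / 4 * (n * Real.log n))
    (hlog : 4 ≤ κ * Real.log n) (hn : 12 ≤ α * n) (hWcard : α * n ≤ #W)
    (hW : ∀ v ∈ W, min ((G.neighborSet v).ncard : ℝ) (ε * Real.log n)
      ≤ ({u | u ∈ W ∧ G.Adj v u} : Set (Fin n)).ncard) :
    HasManyHamiltonPaths G W := by
  have log_nonneg : 0 ≤ Real.log n := Real.log_natCast_nonneg n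
  have card_le : (#W : ℝ) ≤ n := mod_cast card_finset_fin_le W
  have sparse : (#R.edgeFinset : ℝ) + #W * ⌈δ * Real.log n⌉₊ + Fintype.card (Fin n)
      ≤ κ * (n * Real.log n) := by
    calc _ ≤ κ / 4 * (n * Real.log n) + n * (κ / 4 * Real.log n + 1) + n := by
          rw [Fintype.card_fin]
          gcongr
          exact (Nat.ceil_lt_add_one (mul_nonneg hδ0.le log_nonneg)).le.trans
            (by gcongr; linarith)
      _ ≤ κ * (n * Real.log n) := by nlinarith
  have min_le (v) (hv : v ∈ W) :
      min (G.degree v : ℝ) (δ * Real.log n) ≤ #(G.neighborFinset v ∩ W) := by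
    have inter_eq : ({u | u ∈ W ∧ G.Adj v u} : Set (Fin n)) = ↑(G.neighborFinset v ∩ W) := by
      ext u
      simp [and_comm]
    have ncard_eq : (G.neighborSet v).ncard = G.degree v := by
      rw [Set.ncard_eq_toFinset_card', ← SimpleGraph.neighborFinset,
        G.card_neighborFinset_eq_degree]
    have := hW v hv
    rw [inter_eq, ncard_eq, Set.ncard_coe_finset] at this
    exact (min_le_min_left _ (by gcongr)).trans this
  convert h.hasManyHamiltonPaths hboost sparse ?_ ?_ fun v hv => ?_
  · nlinarith [mul_pow α n 2, pow_le_pow_left₀ (by linarith) hWcard 2]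
  · exact_mod_cast hn.trans hWcard
  · convert min_le v hv

theorem many_hamilton_path_endpoints_general {ε α : ℝ} (hε : 0 < ε) (hα : 0 < α) {p : ℕ → ℝ}
    (hp01 : ∀ n, 0 ≤ p n ∧ p n ≤ 1)
    (hp : Tendsto (fun n : ℕ => n * p n - Real.log n - Real.log (Real.log n)) atTop atTop)
    (hO : (fun n : ℕ => n * p n) =O[atTop] fun n : ℕ => Real.log n) :
    WithHighProb p fun n G => ∀ W : Finset (Fin n), α * n ≤ #W →
      (∀ v ∈ W, min ((G.neighborSet v).ncard : ℝ) (ε * Real.log n)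
        ≤ ({u | u ∈ W ∧ G.Adj v u} : Set (Fin n)).ncard) →
      HasManyHamiltonPaths G W := by
  obtain ⟨C, hC0, hC⟩ := hO.exists_pos
  have hC' : ∀ᶠ n : ℕ in atTop, n * p n ≤ C * Real.log n := hC.bound.mono fun n hn => by
    simpa only [Real.norm_of_nonneg (Real.log_natCast_nonneg n)] using (le_abs_self _).trans hn
  obtain ⟨κ, hκ, contains_boosters⟩ := WithHighProb.exists_containsBoosters hp01
    (eventually_log_le hp) (β := α ^ 2 / 32) (by positivity)
  obtain ⟨δ, hδ0, hδ, hδκ, hδε⟩ :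
      ∃ δ > 0, 10 * Real.log 10 * δ ≤ 1 ∧ 4 * δ ≤ κ ∧ δ ≤ ε := by
    refine ⟨min (1 / (10 * Real.log 10)) (min (κ / 4) ε), by positivity, ?_, ?_, by simp⟩
    · rw [← le_div_iff₀' (by positivity)]
      exact min_le_left _ _
    · linarith [(min_le_right (1 / (10 * Real.log 10)) _).trans (min_le_left (κ / 4) ε)]
  have pseudorandom := WithHighProb.isPseudorandom hp01 hp hC0 hC' hδ0 hδ (κ := κ / 4)
    (by positivity)
  refine (pseudorandom.and hp01 contains_boosters).mono hp01 ?_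
  filter_upwards [(tendsto_log_natCast_atTop.const_mul_atTop hκ).eventually_ge_atTop 4,
    (tendsto_natCast_atTop_atTop.const_mul_atTop hα).eventually_ge_atTop 12] with n hlog hn G
  rintro ⟨⟨R, hR, m, hpseudo⟩, hboost⟩ W hWcard hW
  exact hpseudo.hasManyHamiltonPaths_of_le_mul_log hδ0 hδκ hδε hboost hR hlog hn hWcard hW

theorem isBigO_log_of_isLittleO {p : ℕ → ℝ}
    (hp : (fun n : ℕ => n * p n - Real.log n - Real.log (Real.log n))
      =o[atTop] fun n : ℕ => Real.log (Real.log n)) :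
    (fun n : ℕ => n * p n) =O[atTop] fun n : ℕ => Real.log n := by
  have log_log : (fun n : ℕ => Real.log (Real.log n)) =o[atTop] fun n : ℕ => Real.log n :=
    Real.isLittleO_log_id_atTop.comp_tendsto tendsto_log_natCast_atTop
  refine (((hp.trans log_log).isBigO.add (Asymptotics.isBigO_refl _ _)).add
    log_log.isBigO).congr_left fun n => ?_
  ring

/-- **Lemma (many Hamilton paths in induced subgraphs).**
Let `ε > 0` and let `p(n)` satisfy `n·p(n) − log n − log log n → ∞` and
`n·p(n) − log n − log log n = o(log log n)`. Then whp `G ~ G(n, p(n))` is such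
that: for every `W ⊆ V(G)` with `|W| ≥ 0.1n` in which every `v ∈ W` has at least
`min{d_G(v), ε·log n}` neighbours inside `W`, and for every `w ∈ W`, there is
`Y ⊆ W` with `|Y| ≥ n/40` such that for each `y ∈ Y` the induced subgraph `G[W]`
has a Hamilton path with endpoints `w` and `y`. -/
theorem many_hamilton_path_endpoints
    (ε : ℝ) (hε : 0 < ε)
    (p : ℕ → ℝ) (hp01 : ∀ n, 0 ≤ p n ∧ p n ≤ 1)
    (hp : Filter.Tendsto
      (fun n : ℕ => n * p n - Real.log n - Real.log (Real.log n))
      Filter.atTop Filter.atTop)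
    (hp' : (fun n : ℕ => n * p n - Real.log n - Real.log (Real.log n))
      =o[Filter.atTop] (fun n : ℕ => Real.log (Real.log n))) :
    Filter.Tendsto
      (fun n : ℕ => gnpProb n (p n) (fun G =>
        ∀ W : Finset (Fin n), (0.1 : ℝ) * n ≤ (W.card : ℝ) →
        (∀ v ∈ W, min (((G.neighborSet v).ncard : ℝ)) (ε * Real.log n)
          ≤ (({u | u ∈ W ∧ G.Adj v u} : Set (Fin n)).ncard : ℝ)) →
        ∀ w : Fin n, ∀ hw : w ∈ W,
          ∃ Y : Finset (Fin n), ∃ hYW : Y ⊆ W, (n : ℝ) / 40 ≤ (Y.card : ℝ) ∧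
            ∀ y : Fin n, ∀ hy : y ∈ Y,
              ∃ P : (G.induce (↑W : Set (Fin n))).Walk
                  ⟨w, Finset.mem_coe.mpr hw⟩ ⟨y, Finset.mem_coe.mpr (hYW hy)⟩,
                P.IsPath ∧ P.IsHamiltonian))
      Filter.atTop (nhds 1) := by
  refine (many_hamilton_path_endpoints_general hε (by norm_num : (0 : ℝ) < 0.1) hp01 hp
    (isBigO_log_of_isLittleO hp')).mono hp01 (.of_forall fun n G hG W hWcard hW w hw => ?_)
  obtain ⟨Y, hYW, hY, hpaths⟩ := hG W hWcard hW w hw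
  have card_le : (#W : ℝ) ≤ 4 * #Y := mod_cast hY
  exact ⟨Y, hYW, by linarith, hpaths⟩
end

section
/- Let r ≥ 2 be an integer and let G be a graph on n vertices, where n is divisible by r + 1. Then there exists an r-colouring of the edges of G such that every monochromatic matching of G has size at most n/(r+1), and consequently every Hamilton cycle of G contains at most 2n/(r+1) edges of any single colour. -/
/-!
Split the vertices into `r` classes, the last of size at most `2m` and the others of size at most
`m`, and colour an edge by the smaller of the classes of its two ends. Every edge of a colour other
than the last meets the class of that colour, and every edge of the last colour lies inside the
last class. So each colour has a fractional vertex cover of total weight at most `m`: weight `1` on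
its class, or weight `1/2` if it is the last colour. By double counting, a monochromatic graph of
maximum degree at most `d` then has at most `d * m` edges; matchings have `d = 1`, cycles `d = 2`.
-/

open Finset SimpleGraph

section FractionalCovers

variable {V ι : Type*}

/-- A fractional vertex cover of `H`: vertex weights whose sum over the two ends of every edge is
at least `1`. Nonnegativity of the weights is built into the type `ℚ≥0`. -/
def IsFractionalVertexCover (H : SimpleGraph V) (w : V → ℚ≥0) : Prop :=
  ∀ ⦃a b : V⦄, H.Adj a b → 1 ≤ w a + w b

namespace IsFractionalVertexCover

variable {G H : SimpleGraph V} {w : V → ℚ≥0}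

theorem anti (hw : IsFractionalVertexCover H w) (hGH : G ≤ H) : IsFractionalVertexCover G w :=
  fun _ _ hab => hw (hGH hab)

theorem one_le_sum_toFinset [DecidableEq V] (hw : IsFractionalVertexCover H w) {e : Sym2 V}
    (he : e ∈ H.edgeSet) : 1 ≤ ∑ v ∈ e.toFinset, w v := by
  induction e with
  | _ a b =>
    rw [Sym2.toFinset_mk_eq, sum_pair (H.ne_of_adj he)]
    exact hw he

variable [Fintype V]

theorem ncard_edgeSet_le (hw : IsFractionalVertexCover H w) {d : ℕ}
    (hd : ∀ v, (H.neighborSet v).ncard ≤ d) : (H.edgeSet.ncard : ℚ≥0) ≤ d * ∑ v, w v := by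
  classical
  have degree_le (v : V) : H.degree v ≤ d := by
    rw [← card_neighborFinset_eq_degree, ← Set.ncard_coe_finset, coe_neighborFinset]
    exact hd v
  calc (H.edgeSet.ncard : ℚ≥0) = ∑ _e ∈ H.edgeFinset, 1 := by
        rw [← coe_edgeFinset, Set.ncard_coe_finset, sum_const, nsmul_one]
    _ ≤ ∑ e ∈ H.edgeFinset, ∑ v ∈ e.toFinset, w v :=
        sum_le_sum fun e he => hw.one_le_sum_toFinset (mem_edgeFinset.1 he)
    _ = ∑ v, ∑ _e ∈ H.incidenceFinset v, w v :=
        sum_comm' fun e v => by simp [incidenceSet]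
    _ = ∑ v, H.degree v * w v := by simp
    _ ≤ ∑ v, d * w v := by gcongr with v; exact degree_le v
    _ = d * ∑ v, w v := (mul_sum ..).symm

theorem ncard_edgeSet_le_of_isMatching {M : G.Subgraph} (hM : M.IsMatching)
    (hw : IsFractionalVertexCover M.spanningCoe w) : (M.edgeSet.ncard : ℚ≥0) ≤ ∑ v, w v := by
  have neighborSet_le_one (v : V) : (M.spanningCoe.neighborSet v).ncard ≤ 1 :=
    (Set.ncard_le_one_iff (Set.toFinite _)).2 fun ha hb => hM.eq_of_adj_left ha hb
  simpa using hw.ncard_edgeSet_le neighborSet_le_one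

theorem ncard_edgeSet_le_of_isCycles (hH : H.IsCycles) (hGH : G ≤ H)
    (hw : IsFractionalVertexCover G w) : (G.edgeSet.ncard : ℚ≥0) ≤ 2 * ∑ v, w v := by
  refine mod_cast hw.ncard_edgeSet_le fun v => ?_
  obtain hempty | hne := (G.neighborSet v).eq_empty_or_nonempty
  · simp [hempty]
  · have hsub : G.neighborSet v ⊆ H.neighborSet v := fun _ hu => hGH hu
    exact (Set.ncard_le_ncard hsub).trans_eq (hH (hne.mono hsub))

end IsFractionalVertexCover

/-- The graph of all pairs of distinct vertices to which `c` gives colour `i`. The monochromatic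
graphs of colour `i` are its subgraphs. -/
def colourGraph (c : Sym2 V → ι) (i : ι) : SimpleGraph V :=
  fromEdgeSet (c ⁻¹' {i})

theorem colourGraph_adj {c : Sym2 V → ι} {i : ι} {a b : V} :
    (colourGraph c i).Adj a b ↔ c s(a, b) = i ∧ a ≠ b := by
  simp [colourGraph]

section ColourCover

variable [Fintype V] {G : SimpleGraph V} {c : Sym2 V → ι} {i : ι} {w : V → ℚ≥0} {m : ℕ}

theorem ncard_edgeSet_le_of_isMatching_of_monochromatic
    (hw : IsFractionalVertexCover (colourGraph c i) w) (hwm : ∑ v, w v ≤ m)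
    {M : G.Subgraph} (hM : M.IsMatching) (hMc : ∀ e ∈ M.edgeSet, c e = i) :
    M.edgeSet.ncard ≤ m := by
  have hle : M.spanningCoe ≤ colourGraph c i := fun a b hab =>
    colourGraph_adj.2 ⟨hMc s(a, b) hab, hab.ne⟩
  exact_mod_cast ((hw.anti hle).ncard_edgeSet_le_of_isMatching hM).trans hwm

theorem length_filter_edges_le_of_isCycle [DecidableEq ι]
    (hw : IsFractionalVertexCover (colourGraph c i) w) (hwm : ∑ v, w v ≤ m)
    {v : V} {p : G.Walk v v} (hp : p.IsCycle) :
    (p.edges.filter (c · = i)).length ≤ 2 * m := by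
  classical
  have hedges : (p.toSubgraph.spanningCoe ⊓ colourGraph c i).edgeSet =
      (p.edges.filter (c · = i)).toFinset := by
    ext ⟨a, b⟩
    have : s(a, b) ∈ p.edges → a ≠ b := fun h => (p.adj_of_mem_edges h).ne
    simp only [mem_edgeSet, inf_adj, Subgraph.spanningCoe_adj, p.adj_toSubgraph_iff_mem_edges,
      colourGraph_adj, List.coe_toFinset, List.mem_filter, decide_eq_true_eq, Set.mem_ofPred_eq]
    tauto
  have hcard : (p.toSubgraph.spanningCoe ⊓ colourGraph c i).edgeSet.ncard =
      (p.edges.filter (c · = i)).length := by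
    rw [hedges, Set.ncard_coe_finset, List.toFinset_card_of_nodup (hp.edges_nodup.filter _)]
  have hbound := (hw.anti inf_le_right).ncard_edgeSet_le_of_isCycles
    hp.isCycles_spanningCoe_toSubgraph inf_le_left
  rw [hcard] at hbound
  exact_mod_cast hbound.trans (mul_le_mul_right hwm 2)

end ColourCover

/-- The colouring of each pair of vertices by the smaller of the two labels of its ends. -/
def minColouring [LinearOrder ι] (l : V → ι) (e : Sym2 V) : ι :=
  (e.map l).inf

section MinColouring

variable [LinearOrder ι] (l : V → ι)

theorem isFractionalVertexCover_colourGraph_minColouring (i : ι) :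
    IsFractionalVertexCover (colourGraph (minColouring l) i)
      (fun v => if l v = i then 1 else 0) := by
  intro a b hab
  have hmin : l a ⊓ l b = i := (colourGraph_adj.1 hab).1
  obtain h | h := min_choice (l a) (l b) <;> simp [h.symm.trans hmin]

theorem isFractionalVertexCover_colourGraph_minColouring_top [OrderTop ι] :
    IsFractionalVertexCover (colourGraph (minColouring l) ⊤)
      (fun v => if l v = ⊤ then 1 / 2 else 0) := by
  intro a b hab
  obtain ⟨ha, hb⟩ : l a = ⊤ ∧ l b = ⊤ := inf_eq_top_iff.1 (colourGraph_adj.1 hab).1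
  simp only [ha, hb, if_true, add_halves, le_refl]

end MinColouring

variable [Fintype V] [Fintype ι]

theorem exists_forall_card_fiber_le [DecidableEq ι] (k : ι → ℕ)
    (hk : Fintype.card V ≤ ∑ i, k i) : ∃ l : V → ι, ∀ i, #{v | l v = i} ≤ k i := by
  obtain ⟨f⟩ : Nonempty (V ↪ Σ i, Fin (k i)) :=
    Function.Embedding.nonempty_of_card_le (by simpa using hk)
  refine ⟨fun v => (f v).1, fun i => ?_⟩
  calc #{v | (f v).1 = i}
    _ ≤ #(univ.map (Function.Embedding.sigmaMk (β := fun j => Fin (k j)) i)) := by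
        refine card_le_card_of_injOn f (fun v hv => ?_) f.injective.injOn
        obtain rfl : (f v).1 = i := by simpa using hv
        simp
    _ = k i := by simp

theorem exists_colouring_forall_exists_isFractionalVertexCover [LinearOrder ι] [OrderTop ι] {m : ℕ}
    (hV : Fintype.card V ≤ (Fintype.card ι + 1) * m) :
    ∃ c : Sym2 V → ι, ∀ i, ∃ w, IsFractionalVertexCover (colourGraph c i) w ∧ ∑ v, w v ≤ m := by
  obtain ⟨l, hl⟩ := exists_forall_card_fiber_le (V := V)
    (fun i : ι => m + if i = ⊤ then m else 0) (by simpa [sum_add_distrib, add_mul] using hV)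
  refine ⟨minColouring l, fun i => ?_⟩
  by_cases hi : i = ⊤
  · subst hi
    refine ⟨_, isFractionalVertexCover_colourGraph_minColouring_top l, ?_⟩
    have hcard : (#{v | l v = ⊤} : ℚ≥0) ≤ m + m := mod_cast by simpa using hl ⊤
    calc ∑ v, (if l v = ⊤ then 1 / 2 else 0 : ℚ≥0) = #{v | l v = ⊤} / 2 := by
          simp [← sum_filter, div_eq_mul_inv]
      _ ≤ (m + m) / 2 := by gcongr
      _ = m := add_self_div_two _
  · refine ⟨_, isFractionalVertexCover_colourGraph_minColouring l i, ?_⟩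
    simpa [hi] using hl i

end FractionalCovers

theorem tightness_colouring_general {V : Type*} [Fintype V] (r m : ℕ) [NeZero r]
    (hV : Fintype.card V ≤ (r + 1) * m) :
    ∃ c : Sym2 V → Fin r, ∀ (G : SimpleGraph V) (i : Fin r),
      (∀ M : G.Subgraph, M.IsMatching → (∀ e ∈ M.edgeSet, c e = i) → M.edgeSet.ncard ≤ m) ∧
      (∀ (v : V) (p : G.Walk v v), p.IsCycle →
        (p.edges.filter (fun e => c e = i)).length ≤ 2 * m) := by
  obtain ⟨c, hc⟩ := exists_colouring_forall_exists_isFractionalVertexCover (ι := Fin r)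
    (by simpa using hV)
  refine ⟨c, fun G i => ?_⟩
  obtain ⟨w, hw, hwm⟩ := hc i
  exact ⟨fun M => ncard_edgeSet_le_of_isMatching_of_monochromatic hw hwm,
    fun v p => length_filter_edges_le_of_isCycle hw hwm⟩

/-- **Proposition (tightness construction).**
Let `r ≥ 2` and let `G` be a graph on `n` vertices with `(r+1) ∣ n`. Then there is
an `r`-colouring of the edges of `G` in which every monochromatic matching has size
at most `n/(r+1)`, and consequently every Hamilton cycle contains at most
`2n/(r+1)` edges of any single colour. -/
theorem tightness_colouring
    {V : Type*} [Fintype V] [DecidableEq V] (G : SimpleGraph V) (n : ℕ)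
    (hn : Fintype.card V = n) (r : ℕ) (hr : 2 ≤ r) (hdvd : (r + 1) ∣ n) :
    ∃ c : Sym2 V → Fin r,
      (∀ i : Fin r, ∀ M : G.Subgraph, M.IsMatching → (∀ e ∈ M.edgeSet, c e = i) →
        (M.edgeSet.ncard : ℝ) ≤ (n : ℝ) / (r + 1)) ∧
      (∀ i : Fin r, ∀ (v : V) (w : G.Walk v v), w.IsHamiltonianCycle →
        ((w.edges.filter (fun e => c e = i)).length : ℝ) ≤ 2 * n / (r + 1)) := by
  obtain ⟨m, rfl⟩ := hdvd
  have : NeZero r := ⟨by omega⟩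
  obtain ⟨c, hc⟩ := tightness_colouring_general r m hn.le
  have hdiv : (((r + 1) * m : ℕ) : ℝ) / (r + 1) = m := by push_cast; field_simp
  simp only [mul_div_assoc, hdiv]
  exact ⟨c, fun i M hM hMc => mod_cast (hc G i).1 M hM hMc,
    fun i v w hw => mod_cast (hc G i).2 v w hw.isCycle⟩
end
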